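/- arXiv:1501.06822 — 4 statements merged into one kernel-verified Lean document; each statement's English description precedes it below -/
import Mathlib

section
/- In the heat kernel setup, fix an integer b ≥ 2 and α ∈ (−2,1). Define, for f, g ∈ L^∞(μ), the paraproduct Π_g^{(b)}(f) := γ_b^{−1} ∫_0^1 [ (tL)P_t^{(b)}( Q_t^{(b−1)} f · P_t^{(b)} g ) + Q_t^{(b−1)}( (tL)P_t^{(b)} f · P_t^{(b)} g ) ] dt/t, where for s ∈ (0,1] the functions Q_s^{(b−1)} Π_g^{(b)}(f) and e^{−L} Π_g^{(b)}(f) are defined by applying the operators under the time integral (each resulting dt/t-integral converging absolutely in L^∞). Then there is a constant C such that for every f ∈ L^∞ with ‖f‖_{C^α,(b−1)} < ∞ and every g ∈ L^∞: ‖e^{−L} Π_g^{(b)}(f)‖_∞ + sup_{0<s≤1} s^{−α/2} ‖Q_s^{(b−1)} Π_g^{(b)}(f)‖_∞ ≤ C·‖g‖_∞·‖f‖_{C^α,(b−1)}, i.e. ‖Π_g^{(b)}(f)‖_{C^α} ≲ ‖g‖_∞‖f‖_{C^α}. (Proposition 3.2, first estimate.) -/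
open MeasureTheory Metric Set
open scoped ENNReal NNReal

noncomputable section

/-- The (pointwise) supremum norm of a real-valued function, valued in `ℝ≥0∞`. -/
def supNorm {M : Type*} (g : M → ℝ) : ℝ≥0∞ := ⨆ x, (‖g x‖₊ : ℝ≥0∞)

/-- `γ_a = ∫_0^∞ s^a e^{-s} ds/s`. -/
def gammaInt (a : ℕ) : ℝ := ∫ s in Set.Ioi (0 : ℝ), s ^ a * Real.exp (-s) / s

/-- A conservative heat kernel on a doubling metric measure space, satisfying the
Gaussian upper estimates (UE) for all time derivatives, for `0 < t ≤ 1`. -/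
structure HeatKernelSetup (M : Type*) [MeasurableSpace M] [MetricSpace M] where
  μ : Measure M
  p : ℝ → M → M → ℝ
  C_D : ℝ
  C_D_pos : 0 < C_D
  doubling : ∀ (x : M) (r : ℝ), 0 < r →
    μ (Metric.ball x (2 * r)) ≤ ENNReal.ofReal C_D * μ (Metric.ball x r)
  p_nonneg : ∀ t : ℝ, 0 < t → ∀ x y, 0 ≤ p t x y
  p_symm : ∀ t : ℝ, 0 < t → ∀ x y, p t x y = p t y x
  p_meas : ∀ t : ℝ, 0 < t → Measurable (Function.uncurry (p t))
  semigroup : ∀ s t : ℝ, 0 < s → 0 < t → ∀ x z,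
    p (s + t) x z = ∫ y, p s x y * p t y z ∂μ
  conservative : ∀ t : ℝ, 0 < t → ∀ x, ∫ y, p t x y ∂μ = 1
  smooth : ∀ (x y : M) (m : ℕ) (t : ℝ), 0 < t →
    DifferentiableAt ℝ (iteratedDeriv m (fun s => p s x y)) t
  diff_under_int : ∀ (f : M → ℝ), Measurable f → supNorm f < ⊤ →
    ∀ (m : ℕ) (x : M) (t : ℝ), 0 < t →
      iteratedDeriv m (fun s => ∫ y, p s x y * f y ∂μ) t
        = ∫ y, iteratedDeriv m (fun s => p s x y) t * f y ∂μ
  UE : ∀ m : ℕ, ∃ C, 0 < C ∧ ∃ c, 0 < c ∧ ∀ t : ℝ, 0 < t → t ≤ 1 → ∀ x y,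
    |t ^ m * iteratedDeriv m (fun s => p s x y) t|
      ≤ C / Real.sqrt ((μ (Metric.ball x (Real.sqrt t))).toReal
            * (μ (Metric.ball y (Real.sqrt t))).toReal)
          * Real.exp (-c * dist x y ^ 2 / t)

namespace HeatKernelSetup

variable {M : Type*} [MeasurableSpace M] [MetricSpace M] (H : HeatKernelSetup M)

/-- The semigroup `e^{-tL}` applied to `f`. -/
def S (t : ℝ) (f : M → ℝ) (x : M) : ℝ := ∫ y, H.p t x y * f y ∂H.μ

/-- `Q_t^{(a)} f = (-1)^a t^a ∂_t^a (e^{-tL} f)`. -/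
def Q (a : ℕ) (t : ℝ) (f : M → ℝ) (x : M) : ℝ :=
  (-1 : ℝ) ^ a * t ^ a * iteratedDeriv a (fun s => H.S s f x) t

/-- `P_t^{(a)} f = ∑_{k<a} c_{a,k} (-1)^k t^k ∂_t^k (e^{-tL} f)`, where the coefficients
`c_{a,k} = 1/k!` are determined by `φ_a(x) = (∑_k c_{a,k} x^k) e^{-x}`. -/
def P (a : ℕ) (t : ℝ) (f : M → ℝ) (x : M) : ℝ :=
  ∑ k ∈ Finset.range a, ((Nat.factorial k : ℝ))⁻¹ * (-1 : ℝ) ^ k * t ^ k *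
    iteratedDeriv k (fun s => H.S s f x) t

/-- `(tL)P_t^{(a)} f = ∑_{k<a} c_{a,k} (-1)^{k+1} t^{k+1} ∂_t^{k+1} (e^{-tL} f)`. -/
def LP (a : ℕ) (t : ℝ) (f : M → ℝ) (x : M) : ℝ :=
  ∑ k ∈ Finset.range a, ((Nat.factorial k : ℝ))⁻¹ * (-1 : ℝ) ^ (k + 1) * t ^ (k + 1) *
    iteratedDeriv (k + 1) (fun s => H.S s f x) t

/-- The Hölder norm `‖f‖_{C^σ,(a)} = ‖e^{-L} f‖_∞ + sup_{0<t≤1} t^{-σ/2} ‖Q_t^{(a)} f‖_∞`. -/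
def CNorm (a : ℕ) (σ : ℝ) (f : M → ℝ) : ℝ≥0∞ :=
  supNorm (H.S 1 f) +
    ⨆ t ∈ Set.Ioc (0 : ℝ) 1, ENNReal.ofReal (t ^ (-σ / 2)) * supNorm (H.Q a t f)

/-- The integrand of the paraproduct `Π_g^{(b)}(f)` at frequency scale `t`:
`(tL)P_t^{(b)}( Q_t^{(b-1)} f · P_t^{(b)} g ) + Q_t^{(b-1)}( (tL)P_t^{(b)} f · P_t^{(b)} g )`. -/
def paraInner (b : ℕ) (g f : M → ℝ) (t : ℝ) : M → ℝ := fun y =>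
  H.LP b t (fun z => H.Q (b - 1) t f z * H.P b t g z) y
    + H.Q (b - 1) t (fun z => H.LP b t f z * H.P b t g z) y

/-- `Q_s^{(a)} Π_g^{(b)}(f)`, defined by applying `Q_s^{(a)}` under the time integral. -/
def paraQ (b a : ℕ) (g f : M → ℝ) (s : ℝ) : M → ℝ := fun x =>
  (gammaInt b)⁻¹ * ∫ t in Set.Ioc (0 : ℝ) 1, H.Q a s (H.paraInner b g f t) x / t

/-- `e^{-L} Π_g^{(b)}(f)`, defined by applying `e^{-L}` under the time integral. -/
def paraS (b : ℕ) (g f : M → ℝ) : M → ℝ := fun x =>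
  (gammaInt b)⁻¹ * ∫ t in Set.Ioc (0 : ℝ) 1, H.S 1 (H.paraInner b g f t) x / t

/-- The paraproduct `Π_g^{(b)}(f)` as a function, when the integral converges. -/
def paraFn (b : ℕ) (g f : M → ℝ) : M → ℝ := fun x =>
  (gammaInt b)⁻¹ * ∫ t in Set.Ioc (0 : ℝ) 1, H.paraInner b g f t x / t

/-- The resolution operator `R(v)_t = ∫_0^t P_{t-s}^{(b)} v(s) ds`. -/
def resolve (b : ℕ) (v : ℝ → M → ℝ) (t : ℝ) : M → ℝ := fun x =>
  ∫ s in Set.Ioc (0 : ℝ) t, H.P b (t - s) (v s) x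

end HeatKernelSetup

namespace HeatKernelSetup

section helpers

variable {M : Type*} [MeasurableSpace M] [MetricSpace M] (H : HeatKernelSetup M)

/-- volume of a ball is neither zero nor infinite at scale `t ≤ 1`. -/
lemma ball_sqrt_ne (x : M) {t : ℝ} (ht : 0 < t) (ht1 : t ≤ 1) :
    (H.μ (ball x (Real.sqrt t))).toReal ≠ 0 := by
  intro h0
  obtain ⟨C, hC, c, hc, hUE⟩ := H.UE 0
  have h1 := H.conservative t ht x
  have h2 : ∀ y, H.p t x y = 0 := by
    intro y
    have := hUE t ht ht1 x y
    rw [h0] at this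
    simpa using this
  simp [h2] at h1

lemma doubling_pow (x : M) {r : ℝ} (hr : 0 < r) (k : ℕ) :
    H.μ (ball x (2 ^ k * r)) ≤ ENNReal.ofReal (max H.C_D 1) ^ k * H.μ (ball x r) := by
  induction k with
  | zero => simp
  | succ k ih =>
    have h := H.doubling x (2 ^ k * r) (by positivity)
    rw [pow_succ' 2 k, mul_assoc]
    refine h.trans ?_
    rw [pow_succ', mul_assoc]
    gcongr
    exact le_max_left _ _

lemma ball_ne_top (x : M) {r : ℝ} (_hr : 0 < r) : H.μ (ball x r) ≠ ⊤ := by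
  have h1 := H.ball_sqrt_ne x one_pos le_rfl
  rw [Real.sqrt_one] at h1
  have h2 : H.μ (ball x 1) ≠ ⊤ := fun h => h1 (by simp [h])
  obtain ⟨k, hk⟩ := pow_unbounded_of_one_lt r (one_lt_two)
  have h3 := H.doubling_pow x one_pos k
  have h4 : H.μ (ball x r) ≤ H.μ (ball x (2 ^ k * 1)) :=
    measure_mono (ball_subset_ball (by linarith))
  exact ne_top_of_le_ne_top (ENNReal.mul_ne_top (by finiteness) h2) (h4.trans h3)

lemma ball_ne_zero (x : M) {r : ℝ} (hr : 0 < r) : H.μ (ball x r) ≠ 0 := by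
  have h1 := H.ball_sqrt_ne x one_pos le_rfl
  rw [Real.sqrt_one] at h1
  have h2 : H.μ (ball x 1) ≠ 0 := fun h => h1 (by simp [h])
  intro h0
  obtain ⟨k, hk⟩ := pow_unbounded_of_one_lt (1/r) (one_lt_two)
  have h3 := H.doubling_pow x hr k
  rw [h0, mul_zero] at h3
  have h4 : H.μ (ball x 1) ≤ H.μ (ball x (2 ^ k * r)) :=
    measure_mono (ball_subset_ball (by
      rw [div_lt_iff₀ hr] at hk; linarith))
  exact h2 (le_antisymm (h4.trans h3) bot_le)

lemma sigmaFinite : SigmaFinite H.μ := by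
  rcases isEmpty_or_nonempty M with hM | ⟨⟨x⟩⟩
  · have : H.μ = 0 := Measure.eq_zero_of_isEmpty _
    rw [this]; infer_instance
  · refine ⟨⟨⟨fun n => toMeasurable H.μ (ball x (n + 1)), fun _ => trivial, fun n => ?_, ?_⟩⟩⟩
    · rw [measure_toMeasurable]
      exact (H.ball_ne_top x (by positivity)).lt_top
    · rw [eq_univ_iff_forall]
      intro y
      obtain ⟨n, hn⟩ := exists_nat_gt (dist y x)
      exact mem_iUnion.2 ⟨n, subset_toMeasurable _ _ (by rw [mem_ball]; linarith)⟩

lemma quad_bound (L c n : ℝ) (hc : 0 < c) : n * L - c * n ^ 2 ≤ (L + 1) ^ 2 / (4 * c) - n := by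
  rw [← sub_nonneg]
  have : (L + 1) ^ 2 / (4 * c) - n - (n * L - c * n ^ 2)
      = (2 * c * n - (L + 1)) ^ 2 / (4 * c) := by
    field_simp; ring
  rw [this]; positivity

lemma quad_bound' (L c n : ℝ) (hc : 0 < c) : n * L ≤ L ^ 2 / (4 * c) + c * n ^ 2 := by
  rw [← sub_nonneg]
  have : L ^ 2 / (4 * c) + c * n ^ 2 - n * L
      = (2 * c * n - L) ^ 2 / (4 * c) := by
    field_simp; ring
  rw [this]; positivity

/-- A measurable majorant of the Gaussian with controlled integral. -/
lemma gauss (c : ℝ) (hc : 0 < c) : ∃ K : ℝ, 0 < K ∧ ∀ (x : M) (t : ℝ), 0 < t →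
    ∃ φ : M → ℝ≥0∞, Measurable φ ∧ (∀ y, ENNReal.ofReal (Real.exp (-c * dist x y ^ 2 / t)) ≤ φ y) ∧
      ∫⁻ y, φ y ∂H.μ ≤ ENNReal.ofReal K * H.μ (ball x (Real.sqrt t)) := by
  set D := max H.C_D 1 with hD
  have hD1 : 1 ≤ D := le_max_right _ _
  have hD0 : 0 < D := by linarith
  set K0 := Real.exp ((Real.log D + 1) ^ 2 / (4 * c)) with hK0
  have hsum : Summable (fun n : ℕ => K0 * Real.exp (-1) ^ n) :=
    (summable_geometric_of_lt_one (Real.exp_pos _).le (by simp)).mul_left _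
  have hb : ∀ n : ℕ, Real.exp (-c * n ^ 2) * D ^ n ≤ K0 * Real.exp (-1) ^ n := by
    intro n
    rw [hK0, ← Real.exp_nat_mul, ← Real.exp_add]
    have : D ^ n = Real.exp (n * Real.log D) := by
      rw [Real.exp_nat_mul, Real.exp_log hD0]
    rw [this, ← Real.exp_add]
    apply Real.exp_le_exp.2
    have := quad_bound (Real.log D) c n hc
    linarith
  refine ⟨∑' n : ℕ, K0 * Real.exp (-1) ^ n, hsum.tsum_pos (fun n => by positivity) 0 (by positivity), ?_⟩
  intro x t ht
  have hst : 0 < Real.sqrt t := Real.sqrt_pos.2 ht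
  let A : ℕ → Set M := fun n => toMeasurable H.μ (ball x ((n + 1) * Real.sqrt t))
  have hA : ∀ n, MeasurableSet (A n) := fun n => measurableSet_toMeasurable _ _
  refine ⟨fun y => ∑' n : ℕ, (A n).indicator (fun _ => ENNReal.ofReal (Real.exp (-c * n ^ 2))) y,
    Measurable.tsum fun n => measurable_const.indicator (hA n), ?_, ?_⟩
  · intro y
    set ρ := dist x y / Real.sqrt t with hρ
    have hρ0 : 0 ≤ ρ := by positivity
    have hmem : y ∈ A ⌊ρ⌋₊ := by
      apply subset_toMeasurable
      rw [mem_ball, dist_comm]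
      have := Nat.lt_floor_add_one ρ
      rwa [hρ, div_lt_iff₀ hst] at this
    refine le_trans ?_ (ENNReal.le_tsum ⌊ρ⌋₊)
    rw [indicator_of_mem hmem]
    apply ENNReal.ofReal_le_ofReal
    apply Real.exp_le_exp.2
    have h1 : (⌊ρ⌋₊ : ℝ) ^ 2 ≤ ρ ^ 2 := by
      gcongr; exact Nat.floor_le hρ0
    have h2 : dist x y ^ 2 / t = ρ ^ 2 := by
      rw [hρ, div_pow, Real.sq_sqrt ht.le]
    rw [mul_div_assoc, h2]
    nlinarith
  · rw [lintegral_tsum (fun n => (measurable_const.indicator (hA n)).aemeasurable)]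
    rw [ENNReal.ofReal_tsum_of_nonneg (fun n => by positivity) hsum, ← ENNReal.tsum_mul_right]
    refine ENNReal.tsum_le_tsum fun n => ?_
    rw [lintegral_indicator_const (hA n), measure_toMeasurable]
    have h1 : H.μ (ball x ((n + 1) * Real.sqrt t)) ≤ ENNReal.ofReal D ^ n * H.μ (ball x (Real.sqrt t)) := by
      refine le_trans (measure_mono (ball_subset_ball ?_)) (H.doubling_pow x hst n)
      gcongr
      have : n + 1 ≤ 2 ^ n := Nat.lt_two_pow_self
      exact_mod_cast this
    calc _ ≤ ENNReal.ofReal (Real.exp (-c * n ^ 2)) * (ENNReal.ofReal D ^ n * H.μ (ball x (Real.sqrt t))) := by gcongr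
      _ = ENNReal.ofReal (Real.exp (-c * n ^ 2) * D ^ n) * H.μ (ball x (Real.sqrt t)) := by
        rw [ENNReal.ofReal_mul (by positivity), ENNReal.ofReal_pow hD0.le, mul_assoc]
      _ ≤ _ := mul_le_mul_left (ENNReal.ofReal_le_ofReal (hb n)) _

/-- comparison of volumes at different centres. -/
lemma vol_compare (c : ℝ) (hc : 0 < c) : ∃ K : ℝ, 0 < K ∧ ∀ (x y : M) (t : ℝ), 0 < t →
    (H.μ (ball x (Real.sqrt t))).toReal ≤
      K * Real.exp (c * dist x y ^ 2 / t) * (H.μ (ball y (Real.sqrt t))).toReal := by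
  set D := max H.C_D 1 with hD
  have hD1 : 1 ≤ D := le_max_right _ _
  have hD0 : 0 < D := by linarith
  refine ⟨D * Real.exp (Real.log D ^ 2 / (4 * c)), by positivity, ?_⟩
  intro x y t ht
  have hst : 0 < Real.sqrt t := Real.sqrt_pos.2 ht
  set ρ := dist x y / Real.sqrt t with hρ
  have hρ0 : 0 ≤ ρ := by positivity
  have hd : dist x y = ρ * Real.sqrt t := by rw [hρ]; field_simp
  have h2 : dist x y ^ 2 / t = ρ ^ 2 := by
    rw [hρ, div_pow, Real.sq_sqrt ht.le]
  set k := ⌈ρ⌉₊ with hk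
  have hk1 : ρ ≤ k := Nat.le_ceil _
  have hk2 : (k : ℝ) < ρ + 1 := Nat.ceil_lt_add_one hρ0
  have h3 : (k : ℝ) + 1 ≤ 2 ^ k := by
    have : k + 1 ≤ 2 ^ k := Nat.lt_two_pow_self
    exact_mod_cast this
  have hsub : ball x (Real.sqrt t) ⊆ ball y (2 ^ k * Real.sqrt t) := by
    apply ball_subset_ball'
    rw [hd]; nlinarith
  have h4 := (measure_mono hsub).trans (H.doubling_pow y hst k)
  have h5 := ENNReal.toReal_mono (ENNReal.mul_ne_top (by finiteness) (H.ball_ne_top y hst)) h4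
  rw [ENNReal.toReal_mul, ENNReal.toReal_pow, ENNReal.toReal_ofReal (by positivity)] at h5
  refine h5.trans ?_
  gcongr
  rw [mul_div_assoc, h2, mul_assoc, ← Real.exp_add]
  calc D ^ k = D ^ (k : ℝ) := by simp
    _ ≤ D ^ (ρ + 1) := Real.rpow_le_rpow_of_exponent_le hD1 hk2.le
    _ = D * Real.exp (ρ * Real.log D) := by
      rw [Real.rpow_add hD0, Real.rpow_one, mul_comm, Real.rpow_def_of_pos hD0, mul_comm ρ]
    _ ≤ _ := by
      gcongr
      exact quad_bound' _ _ _ hc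

/-- time derivatives of the heat kernel -/
def kd (n : ℕ) (t : ℝ) (x y : M) : ℝ := iteratedDeriv n (fun s => H.p s x y) t

lemma kd_bound (n : ℕ) : ∃ C : ℝ, 0 < C ∧ ∃ c : ℝ, 0 < c ∧ ∀ t : ℝ, 0 < t → t ≤ 1 → ∀ x y,
    |H.kd n t x y| ≤ C / (t ^ n * (H.μ (ball x (Real.sqrt t))).toReal)
      * Real.exp (-c * dist x y ^ 2 / t) := by
  obtain ⟨C, hC, c, hc, hUE⟩ := H.UE n
  obtain ⟨K, hK, hV⟩ := H.vol_compare c hc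
  refine ⟨C * Real.sqrt K, by positivity, c / 2, by positivity, ?_⟩
  intro t ht ht1 x y
  have h1 := hUE t ht ht1 x y
  have h2 := hV x y t ht
  have hst : 0 < Real.sqrt t := Real.sqrt_pos.2 ht
  set Vx := (H.μ (ball x (Real.sqrt t))).toReal
  set Vy := (H.μ (ball y (Real.sqrt t))).toReal
  have hx : 0 < Vx := ENNReal.toReal_pos (H.ball_ne_zero x hst) (H.ball_ne_top x hst)
  have hy : 0 < Vy := ENNReal.toReal_pos (H.ball_ne_zero y hst) (H.ball_ne_top y hst)
  set E := Real.exp (c / 2 * dist x y ^ 2 / t) with hE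
  have hE2 : Real.exp (c * dist x y ^ 2 / t) = E ^ 2 := by
    rw [sq E, hE, ← Real.exp_add]; congr 1; ring
  have hE3 : Real.exp (-c * dist x y ^ 2 / t) = (E ^ 2)⁻¹ := by
    rw [← hE2, ← Real.exp_neg]; congr 1; ring
  have hE4 : Real.exp (-(c/2) * dist x y ^ 2 / t) = E⁻¹ := by
    rw [hE, ← Real.exp_neg]; congr 1; ring
  have hEp : 0 < E := Real.exp_pos _
  have hq : Vx ≤ Real.sqrt K * E * Real.sqrt (Vx * Vy) := by
    have : Vx ^ 2 ≤ (Real.sqrt K * E * Real.sqrt (Vx * Vy)) ^ 2 := by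
      rw [mul_pow, mul_pow, Real.sq_sqrt hK.le, Real.sq_sqrt (by positivity)]
      rw [hE2] at h2
      nlinarith
    exact le_of_sq_le_sq this (by positivity)
  rw [abs_mul, abs_of_pos (pow_pos ht n), hE3] at h1
  rw [hE4]
  change t ^ n * |H.kd n t x y| ≤ _ at h1
  have h3 : |H.kd n t x y| ≤ (C / Real.sqrt (Vx * Vy) * (E ^ 2)⁻¹) / t ^ n := by
    rw [le_div_iff₀ (by positivity)]; linarith
  refine h3.trans ?_
  have hs : 0 < Real.sqrt (Vx * Vy) := by positivity
  rw [← sub_nonneg]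
  have : C * √K / (t ^ n * Vx) * E⁻¹ - C / √(Vx * Vy) * (E ^ 2)⁻¹ / t ^ n
     = C * (√K * E * √(Vx * Vy) - Vx) / (t ^ n * Vx * E ^ 2 * √(Vx * Vy)) := by
    field_simp
  rw [this]
  apply div_nonneg (mul_nonneg hC.le (by linarith)) (by positivity)

lemma kd_hasDerivAt (n : ℕ) {t : ℝ} (ht : 0 < t) (x y : M) :
    HasDerivAt (fun s => H.kd n s x y) (H.kd (n + 1) t x y) t := by
  have := (H.smooth x y n t ht).hasDerivAt
  unfold kd
  rw [iteratedDeriv_succ]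
  exact this

lemma kd_meas (n : ℕ) : ∀ {t : ℝ}, 0 < t → Measurable (fun q : M × M => H.kd n t q.1 q.2) := by
  induction n with
  | zero =>
    intro t ht
    simpa [kd, Function.uncurry_def] using H.p_meas t ht
  | succ n ih =>
    intro t ht
    have hlim : Filter.Tendsto (fun k : ℕ => (1 : ℝ) / (k + 1)) Filter.atTop
        (nhdsWithin 0 (Ioi 0)) := by
      refine tendsto_nhdsWithin_iff.2 ⟨tendsto_one_div_add_atTop_nhds_zero_nat, ?_⟩
      filter_upwards with k
      simp only [mem_Ioi]; positivity
    refine measurable_of_tendsto_metrizable (f := fun (k : ℕ) (q : M × M) =>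
      ((1 : ℝ) / (k + 1))⁻¹ • (H.kd n (t + (1 : ℝ) / (k + 1)) q.1 q.2 - H.kd n t q.1 q.2)) ?_ ?_
    · intro k
      exact ((ih (t := t + 1 / (k + 1)) (by positivity)).sub (ih ht)).const_smul ((1 : ℝ) / (k + 1))⁻¹
    · rw [tendsto_pi_nhds]
      intro q
      exact (H.kd_hasDerivAt n ht q.1 q.2).tendsto_slope_zero_right.comp hlim

lemma kd_meas_right (n : ℕ) {t : ℝ} (ht : 0 < t) (x : M) : Measurable (H.kd n t x) :=
  (H.kd_meas n ht).comp measurable_prodMk_left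

lemma kd_L1 (n : ℕ) : ∃ C : ℝ, 0 < C ∧ ∀ t : ℝ, 0 < t → t ≤ 1 → ∀ x,
    Integrable (H.kd n t x) H.μ ∧ ∫ y, |H.kd n t x y| ∂H.μ ≤ C / t ^ n := by
  obtain ⟨C, hC, c, hc, hb⟩ := H.kd_bound n
  obtain ⟨K, hK, hg⟩ := H.gauss c hc
  refine ⟨C * K, by positivity, ?_⟩
  intro t ht ht1 x
  have hst : 0 < Real.sqrt t := Real.sqrt_pos.2 ht
  obtain ⟨φ, hφm, hφ, hφi⟩ := hg x t ht
  have hx : 0 < (H.μ (ball x (Real.sqrt t))).toReal :=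
    ENNReal.toReal_pos (H.ball_ne_zero x hst) (H.ball_ne_top x hst)
  have hV : H.μ (ball x (Real.sqrt t)) = ENNReal.ofReal (H.μ (ball x (Real.sqrt t))).toReal :=
    (ENNReal.ofReal_toReal (H.ball_ne_top x hst)).symm
  rw [hV] at hφi
  set V := (H.μ (ball x (Real.sqrt t))).toReal
  have key : ∫⁻ y, ‖H.kd n t x y‖ₑ ∂H.μ ≤ ENNReal.ofReal (C * K / t ^ n) := by
    calc ∫⁻ y, ‖H.kd n t x y‖ₑ ∂H.μ
        ≤ ∫⁻ y, ENNReal.ofReal (C / (t ^ n * V)) * φ y ∂H.μ := by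
          refine lintegral_mono fun y => ?_
          rw [Real.enorm_eq_ofReal_abs]
          refine (ENNReal.ofReal_le_ofReal (hb t ht ht1 x y)).trans ?_
          rw [ENNReal.ofReal_mul (by positivity)]
          gcongr
          exact hφ y
      _ = ENNReal.ofReal (C / (t ^ n * V)) * ∫⁻ y, φ y ∂H.μ := lintegral_const_mul _ hφm
      _ ≤ ENNReal.ofReal (C / (t ^ n * V)) * (ENNReal.ofReal K * ENNReal.ofReal V) := by gcongr
      _ = ENNReal.ofReal (C * K / t ^ n) := by
        rw [← ENNReal.ofReal_mul hK.le, ← ENNReal.ofReal_mul (by positivity)]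
        congr 1
        field_simp
  have hint : Integrable (H.kd n t x) H.μ :=
    ⟨(H.kd_meas_right n ht x).aestronglyMeasurable, key.trans_lt ENNReal.ofReal_lt_top⟩
  refine ⟨hint, ?_⟩
  have : ∫ y, |H.kd n t x y| ∂H.μ = ∫ y, ‖H.kd n t x y‖ ∂H.μ := rfl
  rw [this, integral_norm_eq_lintegral_enorm hint.1]
  exact ENNReal.toReal_le_of_le_ofReal (by positivity) key

/-- local domination of kernel derivatives -/
lemma kd_dom (n : ℕ) {t₀ : ℝ} (ht₀ : 0 < t₀) (x : M) : ∃ bound : M → ℝ, Integrable bound H.μ ∧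
    ∀ᵐ y ∂H.μ, ∀ t ∈ Ioo t₀ 1, |H.kd n t x y| ≤ bound y := by
  obtain ⟨C, hC, c, hc, hb⟩ := H.kd_bound n
  obtain ⟨K, hK, hg⟩ := H.gauss c hc
  obtain ⟨φ, hφm, hφ, hφi⟩ := hg x 1 one_pos
  have hst : 0 < Real.sqrt t₀ := Real.sqrt_pos.2 ht₀
  have hx : 0 < (H.μ (ball x (Real.sqrt t₀))).toReal :=
    ENNReal.toReal_pos (H.ball_ne_zero x hst) (H.ball_ne_top x hst)
  have hfin : ∫⁻ y, φ y ∂H.μ ≠ ⊤ := by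
    refine ne_top_of_le_ne_top (ENNReal.mul_ne_top (by finiteness) (H.ball_ne_top x ?_)) hφi
    simp
  refine ⟨fun y => C / (t₀ ^ n * (H.μ (ball x (Real.sqrt t₀))).toReal) * (φ y).toReal,
    (integrable_toReal_of_lintegral_ne_top hφm.aemeasurable hfin).const_mul _, ?_⟩
  filter_upwards [ae_lt_top hφm hfin] with y hy t ht
  have htp : 0 < t := ht₀.trans ht.1
  refine (hb t htp ht.2.le x y).trans ?_
  have hE : Real.exp (-c * dist x y ^ 2 / t) ≤ (φ y).toReal := by
    have h1 := ENNReal.toReal_mono hy.ne (hφ y)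
    rw [ENNReal.toReal_ofReal (by positivity)] at h1
    refine le_trans (Real.exp_le_exp.2 ?_) h1
    have : c * dist x y ^ 2 / 1 ≤ c * dist x y ^ 2 / t := by
      gcongr
      exact ht.2.le
    rw [neg_mul, neg_div, neg_div]; linarith
  have hVV : (H.μ (ball x (Real.sqrt t₀))).toReal ≤ (H.μ (ball x (Real.sqrt t))).toReal := by
    refine ENNReal.toReal_mono (H.ball_ne_top x (Real.sqrt_pos.2 htp)) (measure_mono (ball_subset_ball ?_))
    exact Real.sqrt_le_sqrt ht.1.le
  have h4 : t₀ ≤ t := ht.1.le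
  gcongr

lemma p_integrable {t : ℝ} (ht : 0 < t) (x : M) : Integrable (H.p t x) H.μ := by
  by_contra h
  have := H.conservative t ht x
  rw [integral_undef h] at this
  exact zero_ne_one this

/-- time derivatives of the semigroup -/
def U (n : ℕ) (t : ℝ) (h : M → ℝ) (x : M) : ℝ := iteratedDeriv n (fun s => H.S s h x) t

lemma supNorm_lt_top {h : M → ℝ} {B : ℝ} (hb : ∀ x, |h x| ≤ B) : supNorm h < ⊤ := by
  refine lt_of_le_of_lt (iSup_le fun x => ?_) (ENNReal.ofReal_lt_top (r := B))
  change ‖h x‖ₑ ≤ _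
  rw [Real.enorm_eq_ofReal_abs]
  exact ENNReal.ofReal_le_ofReal (hb x)

lemma U_eq (n : ℕ) {t : ℝ} (ht : 0 < t) {h : M → ℝ} (hm : Measurable h) {B : ℝ}
    (hb : ∀ x, |h x| ≤ B) (x : M) : H.U n t h x = ∫ y, H.kd n t x y * h y ∂H.μ :=
  H.diff_under_int h hm (supNorm_lt_top hb) n x t ht

lemma U_zero (t : ℝ) (h : M → ℝ) : H.U 0 t h = H.S t h := by
  ext x; simp [U]

lemma U_meas (n : ℕ) {t : ℝ} (ht : 0 < t) {h : M → ℝ} (hm : Measurable h) {B : ℝ}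
    (hb : ∀ x, |h x| ≤ B) : Measurable (H.U n t h) := by
  have := H.sigmaFinite
  have e : H.U n t h = fun x => ∫ y, H.kd n t x y * h y ∂H.μ := by
    ext x; exact H.U_eq n ht hm hb x
  rw [e]
  refine (StronglyMeasurable.integral_prod_right (f := fun x y => H.kd n t x y * h y) ?_).measurable
  exact ((H.kd_meas n ht).mul (hm.comp measurable_snd)).stronglyMeasurable

lemma S_bound {t : ℝ} (ht : 0 < t) {h : M → ℝ} {B : ℝ}
    (hb : ∀ x, |h x| ≤ B) (x : M) : |H.S t h x| ≤ B := by
  unfold S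
  have h1 : ‖∫ y, H.p t x y * h y ∂H.μ‖ ≤ ∫ y, H.p t x y * B ∂H.μ := by
    refine norm_integral_le_of_norm_le ((H.p_integrable ht x).mul_const _) ?_
    filter_upwards with y
    rw [norm_mul, Real.norm_of_nonneg (H.p_nonneg t ht x y)]
    exact mul_le_mul_of_nonneg_left (hb y) (H.p_nonneg t ht x y)
  rw [integral_mul_const, H.conservative t ht x, one_mul] at h1
  exact h1

lemma S_meas {t : ℝ} (ht : 0 < t) {h : M → ℝ} (hm : Measurable h) {B : ℝ}
    (hb : ∀ x, |h x| ≤ B) : Measurable (H.S t h) := by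
  rw [← U_zero]; exact H.U_meas 0 ht hm hb

lemma S_S {s t : ℝ} (hs : 0 < s) (ht : 0 < t) {h : M → ℝ} (hm : Measurable h) {B : ℝ}
    (hb : ∀ x, |h x| ≤ B) (x : M) : H.S s (H.S t h) x = H.S (s + t) h x := by
  have := H.sigmaFinite
  unfold S
  have hmeas : Measurable (Function.uncurry fun y z => H.p s x y * (H.p t y z * h z)) :=
    (((H.p_meas s hs).comp measurable_prodMk_left).comp measurable_fst).mul
      ((H.p_meas t ht).mul (hm.comp measurable_snd))
  have hpi : ∀ y, Integrable (fun z => H.p t y z * h z) H.μ := fun y =>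
    (H.p_integrable ht y).mul_bdd (c := B) hm.aestronglyMeasurable
      (by filter_upwards with z using hb z)
  have hint : Integrable (Function.uncurry fun y z => H.p s x y * (H.p t y z * h z))
      (H.μ.prod H.μ) := by
    rw [integrable_prod_iff hmeas.aestronglyMeasurable]
    refine ⟨by filter_upwards with y using (hpi y).const_mul (H.p s x y), ?_⟩
    refine Integrable.mono' ((H.p_integrable hs x).mul_const B) ?_ ?_
    · exact hmeas.norm.stronglyMeasurable.integral_prod_right'.aestronglyMeasurable
    · filter_upwards with y
      rw [Real.norm_of_nonneg (integral_nonneg fun z => norm_nonneg _)]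
      simp only [Function.uncurry, norm_mul]
      rw [integral_const_mul, Real.norm_of_nonneg (H.p_nonneg s hs x y)]
      refine mul_le_mul_of_nonneg_left ?_ (H.p_nonneg s hs x y)
      calc ∫ z, ‖H.p t y z‖ * ‖h z‖ ∂H.μ ≤ ∫ z, H.p t y z * B ∂H.μ := by
            refine integral_mono ?_ ((H.p_integrable ht y).mul_const _) ?_
            · simpa only [norm_mul] using (hpi y).norm
            · intro z
              simp only
              rw [Real.norm_of_nonneg (H.p_nonneg t ht y z)]
              exact mul_le_mul_of_nonneg_left (hb z) (H.p_nonneg t ht y z)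
        _ = B := by rw [integral_mul_const, H.conservative t ht y, one_mul]
  calc ∫ y, H.p s x y * ∫ z, H.p t y z * h z ∂H.μ ∂H.μ
      = ∫ y, ∫ z, H.p s x y * (H.p t y z * h z) ∂H.μ ∂H.μ := by
        congr 1; ext y; rw [integral_const_mul]
    _ = ∫ z, ∫ y, H.p s x y * (H.p t y z * h z) ∂H.μ ∂H.μ := integral_integral_swap hint
    _ = _ := by
      congr 1; ext z
      rw [H.semigroup s t hs ht, ← integral_mul_const]
      congr 1; ext y; ring

/-- derivatives in the outer variable -/
lemma U_S (n : ℕ) {s t : ℝ} (hs : 0 < s) (ht : 0 < t) {h : M → ℝ} (hm : Measurable h) {B : ℝ}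
    (hb : ∀ x, |h x| ≤ B) (x : M) : H.U n s (H.S t h) x = H.U n (s + t) h x := by
  unfold U
  have h1 := congrFun (iteratedDeriv_comp_add_const n (fun r => H.S r h x) t) s
  rw [← h1]
  apply Filter.EventuallyEq.iteratedDeriv_eq
  filter_upwards [Ioi_mem_nhds hs] with r hr
  exact H.S_S hr ht hm hb x

lemma U_bound1 (n : ℕ) : ∃ C : ℝ, 0 < C ∧ ∀ t : ℝ, 0 < t → t ≤ 1 → ∀ (h : M → ℝ) (B : ℝ),
    Measurable h → (∀ x, |h x| ≤ B) → ∀ x, |H.U n t h x| ≤ C / t ^ n * B := by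
  obtain ⟨C, hC, hL⟩ := H.kd_L1 n
  refine ⟨C, hC, ?_⟩
  intro t ht ht1 h B hm hb x
  rw [H.U_eq n ht hm hb x]
  have hB : 0 ≤ B := (abs_nonneg _).trans (hb x)
  obtain ⟨hi, hl⟩ := hL t ht ht1 x
  have h1 : ‖∫ y, H.kd n t x y * h y ∂H.μ‖ ≤ ∫ y, |H.kd n t x y| * B ∂H.μ := by
    refine norm_integral_le_of_norm_le (hi.abs.mul_const _) ?_
    filter_upwards with y
    rw [norm_mul]
    exact mul_le_mul_of_nonneg_left (hb y) (abs_nonneg _)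
  rw [integral_mul_const] at h1
  exact h1.trans (by gcongr)

/-- some bound at every positive time, locally uniform -/
lemma U_bound2 (n : ℕ) : ∃ C : ℝ, 0 < C ∧ ∀ t : ℝ, 0 < t → ∀ (h : M → ℝ) (B : ℝ),
    Measurable h → (∀ x, |h x| ≤ B) → ∀ x, |H.U n t h x| ≤ C / (min t 1) ^ n * B := by
  obtain ⟨C, hC, hU⟩ := H.U_bound1 n
  refine ⟨C, hC, ?_⟩
  intro t ht h B hm hb x
  rcases le_or_gt t 1 with h1 | h1
  · rw [min_eq_left h1]; exact hU t ht h1 h B hm hb x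
  · rw [min_eq_right h1.le]
    have h2 := hU 1 one_pos le_rfl (H.S (t - 1) h) B (H.S_meas (by linarith) hm hb)
      (H.S_bound (by linarith) hb) x
    rw [H.U_S n one_pos (by linarith) hm hb] at h2
    simpa using h2

lemma U_hasDerivAt (n : ℕ) {t : ℝ} (ht : 0 < t) {h : M → ℝ} (hm : Measurable h) {B : ℝ}
    (hb : ∀ x, |h x| ≤ B) (x : M) :
    HasDerivAt (fun s => H.U n s h x) (H.U (n + 1) t h x) t := by
  have main : ∀ {t : ℝ}, 0 < t → t < 1 → ∀ {h : M → ℝ}, Measurable h → (∀ x, |h x| ≤ B) →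
      HasDerivAt (fun s => H.U n s h x) (H.U (n + 1) t h x) t := by
    intro t ht ht1 h hm hb
    obtain ⟨bd, hbdi, hbd⟩ := H.kd_dom (n + 1) (half_pos ht) x
    obtain ⟨_, _, hL⟩ := H.kd_L1 n
    have key := (hasDerivAt_integral_of_dominated_loc_of_deriv_le (μ := H.μ)
      (F := fun s y => H.kd n s x y * h y) (F' := fun s y => H.kd (n + 1) s x y * h y)
      (bound := fun y => bd y * B) (x₀ := t) (s := Ioo (t / 2) 1)
      (Ioo_mem_nhds (by linarith) ht1) ?_ ?_ ?_ ?_ ?_ ?_).2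
    · rw [H.U_eq (n + 1) ht hm hb x]
      refine key.congr_of_eventuallyEq ?_
      filter_upwards [Ioi_mem_nhds ht] with s hs
      exact H.U_eq n hs hm hb x
    · filter_upwards [Ioi_mem_nhds ht] with s hs
      exact ((H.kd_meas_right n hs x).mul hm).aestronglyMeasurable
    · exact (hL t ht ht1.le x).1.mul_bdd (c := B) hm.aestronglyMeasurable
        (by filter_upwards with z using hb z)
    · exact ((H.kd_meas_right (n + 1) ht x).mul hm).aestronglyMeasurable
    · filter_upwards [hbd] with y hy s hs
      rw [norm_mul]
      have := hy s hs
      exact mul_le_mul this (hb y) (abs_nonneg _) ((abs_nonneg _).trans this)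
    · exact hbdi.mul_const _
    · filter_upwards with y s hs
      exact (H.kd_hasDerivAt n (by have := hs.1; linarith) x y).mul_const _
  rcases lt_or_ge t 1 with h1 | h1
  · exact main ht h1 hm hb
  · have h2 : 0 < t - 1 / 2 := by linarith
    have h3 := main (t := 1 / 2) (by norm_num) (by norm_num) (H.S_meas h2 hm hb) (H.S_bound h2 hb)
    rw [H.U_S (n + 1) (by norm_num) h2 hm hb] at h3
    have h4 : (1 / 2 : ℝ) + (t - 1 / 2) = t := by ring
    rw [h4] at h3
    have h5 : HasDerivAt (fun s => H.U n (s + (t - 1 / 2)) h x) (H.U (n + 1) t h x) (1 / 2) := by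
      refine h3.congr_of_eventuallyEq ?_
      filter_upwards [Ioi_mem_nhds (show (0 : ℝ) < 1 / 2 by norm_num)] with s hs
      rw [H.U_S n hs h2 hm hb]
    have h7 : (1 / 2 : ℝ) = t - (t - 1 / 2) := by ring
    rw [h7] at h5
    have h6 := h5.comp_sub_const t (t - 1 / 2)
    rw [← h7] at h6
    simpa using h6

/-- full composition formula -/
lemma U_U (m n : ℕ) {s t : ℝ} (hs : 0 < s) (hs1 : s ≤ 1) (ht : 0 < t) {h : M → ℝ}
    (hm : Measurable h) {B : ℝ} (hb : ∀ x, |h x| ≤ B) (x : M) :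
    H.U m s (H.U n t h) x = H.U (m + n) (s + t) h x := by
  induction n generalizing t with
  | zero => rw [U_zero]; exact H.U_S m hs ht hm hb x
  | succ n ih =>
    obtain ⟨_, _, hL⟩ := H.kd_L1 m
    obtain ⟨C1, hC1, hU1⟩ := H.U_bound2 n
    obtain ⟨C, hC, hU⟩ := H.U_bound2 (n + 1)
    have hi := (hL s hs hs1 x).1
    have key := (hasDerivAt_integral_of_dominated_loc_of_deriv_le (μ := H.μ)
      (F := fun r y => H.kd m s x y * H.U n r h y)
      (F' := fun r y => H.kd m s x y * H.U (n + 1) r h y)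
      (bound := fun y => |H.kd m s x y| * (C / (min (t / 2) 1) ^ (n + 1) * B)) (x₀ := t)
      (s := Ioi (t / 2))
      (Ioi_mem_nhds (by linarith)) ?_ ?_ ?_ ?_ ?_ ?_).2
    · rw [H.U_eq m hs (H.U_meas (n + 1) ht hm hb) (hU t ht h B hm hb) x]
      have h2 : HasDerivAt (fun r => H.U (m + n) (s + r) h x) (H.U (m + n + 1) (s + t) h x) t := by
        exact HasDerivAt.comp_const_add s t (f := fun s => H.U (m + n) s h x)
          (H.U_hasDerivAt (m + n) (by positivity) hm hb x)
      refine key.unique (h2.congr_of_eventuallyEq ?_)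
      filter_upwards [Ioi_mem_nhds ht] with r hr
      rw [← ih hr, H.U_eq m hs (H.U_meas n hr hm hb) (hU1 r hr h B hm hb) x]
    · filter_upwards [Ioi_mem_nhds ht] with r hr
      exact ((H.kd_meas_right m hs x).mul (H.U_meas n hr hm hb)).aestronglyMeasurable
    · exact hi.mul_bdd (H.U_meas n ht hm hb).aestronglyMeasurable
        (by filter_upwards with z using hU1 t ht h B hm hb z)
    · exact ((H.kd_meas_right m hs x).mul (H.U_meas (n + 1) ht hm hb)).aestronglyMeasurable
    · filter_upwards with y r hr
      have hr' : t / 2 < r := hr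
      rw [norm_mul]
      refine mul_le_mul_of_nonneg_left ((hU r (by linarith) h B hm hb y).trans ?_) (abs_nonneg _)
      have hB : 0 ≤ B := (abs_nonneg _).trans (hb x)
      have : 0 < min (t / 2) 1 := by positivity
      gcongr
    · exact hi.abs.mul_const _
    · filter_upwards with y r hr
      have hr' : t / 2 < r := hr
      exact (H.U_hasDerivAt n (by linarith) hm hb y).const_mul _

lemma comp_bound (m n : ℕ) : ∃ C : ℝ, 0 < C ∧ ∀ s t : ℝ, 0 < s → s ≤ 1 → 0 < t → t ≤ 1 →
    ∀ (h : M → ℝ) (B : ℝ), Measurable h → (∀ x, |h x| ≤ B) → ∀ x,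
      s ^ m * t ^ n * |H.U m s (H.U n t h) x| ≤ C * B * (t / s) ^ n ∧
      s ^ m * t ^ n * |H.U m s (H.U n t h) x| ≤ C * B * (s / t) ^ m := by
  obtain ⟨C, hC, hU⟩ := H.U_bound1 (m + n)
  refine ⟨C, hC, ?_⟩
  intro s t hs hs1 ht ht1 h B hm hb x
  have hB : 0 ≤ B := (abs_nonneg _).trans (hb x)
  have e := H.U_U m n hs hs1 ht hm hb x
  constructor
  · have e2 := H.U_U (m + n) 0 hs hs1 ht hm hb x
    rw [add_zero] at e2
    rw [e, ← e2]
    have h1 := hU s hs hs1 (H.U 0 t h) B (H.U_meas 0 ht hm hb)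
      (by rw [U_zero]; exact H.S_bound ht hb) x
    calc _ ≤ s ^ m * t ^ n * (C / s ^ (m + n) * B) := by gcongr
      _ = _ := by rw [pow_add, div_pow]; field_simp
  · have e2 := H.U_U 0 (m + n) hs hs1 ht hm hb x
    rw [zero_add] at e2
    rw [e, ← e2, U_zero]
    have h1 := H.S_bound hs (hU t ht ht1 h B hm hb) x
    calc _ ≤ s ^ m * t ^ n * (C / t ^ (m + n) * B) := by gcongr
      _ = _ := by rw [pow_add, div_pow]; field_simp

/-- the almost-orthogonality factor -/
def E (s t : ℝ) : ℝ := if t ≤ s then t / s else s / t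

lemma E_nonneg {s t : ℝ} (hs : 0 < s) (ht : 0 < t) : 0 ≤ E s t := by
  unfold E; split_ifs <;> positivity

lemma comp_bound' (m n : ℕ) (hn : 1 ≤ n) : ∃ C : ℝ, 0 < C ∧ ∀ s t : ℝ, 0 < s → s ≤ 1 → 0 < t →
    t ≤ 1 → (1 ≤ m ∨ s = 1) →
    ∀ (h : M → ℝ) (B : ℝ), Measurable h → (∀ x, |h x| ≤ B) → ∀ x,
      s ^ m * t ^ n * |H.U m s (H.U n t h) x| ≤ C * B * E s t := by
  obtain ⟨C, hC, hc⟩ := H.comp_bound m n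
  refine ⟨C, hC, ?_⟩
  intro s t hs hs1 ht ht1 hms h B hm hb x
  have hB : 0 ≤ B := (abs_nonneg _).trans (hb x)
  obtain ⟨h1, h2⟩ := hc s t hs hs1 ht ht1 h B hm hb x
  unfold E
  split_ifs with hst
  · refine h1.trans ?_
    gcongr
    exact pow_le_of_le_one (by positivity) ((div_le_one hs).2 hst) (by omega)
  · refine h2.trans ?_
    push Not at hst
    have hm1 : 1 ≤ m := by
      rcases hms with h | h
      · exact h
      · linarith
    gcongr
    exact pow_le_of_le_one (by positivity) ((div_le_one ht).2 hst.le) (by omega)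

lemma U_sum {ι : Type*} (F : Finset ι) (m : ℕ) {s : ℝ} (hs : 0 < s) (hs1 : s ≤ 1)
    (c : ι → ℝ) (w : ι → M → ℝ) (hw : ∀ i ∈ F, Measurable (w i)) (B : ι → ℝ)
    (hB : ∀ i ∈ F, ∀ x, |w i x| ≤ B i) (x : M) :
    H.U m s (fun y => ∑ i ∈ F, c i * w i y) x = ∑ i ∈ F, c i * H.U m s (w i) x := by
  obtain ⟨_, _, hL⟩ := H.kd_L1 m
  have hi := (hL s hs hs1 x).1
  have hmeas : Measurable (fun y => ∑ i ∈ F, c i * w i y) :=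
    Finset.measurable_fun_sum _ fun i hi => (hw i hi).const_mul _
  have hbd : ∀ x, |∑ i ∈ F, c i * w i x| ≤ ∑ i ∈ F, |c i| * B i := by
    intro x
    refine (Finset.abs_sum_le_sum_abs _ _).trans (Finset.sum_le_sum fun i hi => ?_)
    rw [abs_mul]
    exact mul_le_mul_of_nonneg_left (hB i hi x) (abs_nonneg _)
  rw [H.U_eq m hs hmeas hbd x]
  simp_rw [Finset.mul_sum]
  rw [integral_finsetSum]
  · refine Finset.sum_congr rfl fun i hi => ?_
    rw [H.U_eq m hs (hw i hi) (hB i hi) x, ← integral_const_mul]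
    congr 1; ext y; ring
  · intro i hiF
    have := (hi.mul_bdd (c := B i) (hw i hiF).aestronglyMeasurable
      (by filter_upwards with z using hB i hiF z)).const_mul (c i)
    refine this.congr ?_
    filter_upwards with y
    ring

lemma LP_eq (b : ℕ) (t : ℝ) (h : M → ℝ) : H.LP b t h = fun y => ∑ k ∈ Finset.range b,
    (((Nat.factorial k : ℝ))⁻¹ * (-1 : ℝ) ^ (k + 1) * t ^ (k + 1)) * H.U (k + 1) t h y := rfl

lemma P_eq (b : ℕ) (t : ℝ) (h : M → ℝ) : H.P b t h = fun y => ∑ k ∈ Finset.range b,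
    (((Nat.factorial k : ℝ))⁻¹ * (-1 : ℝ) ^ k * t ^ k) * H.U k t h y := rfl

lemma Q_eq (b : ℕ) (t : ℝ) (h : M → ℝ) : H.Q b t h = fun y =>
    ((-1 : ℝ) ^ b * t ^ b) * H.U b t h y := rfl

lemma LP_meas (b : ℕ) {t : ℝ} (ht : 0 < t) {h : M → ℝ} (hm : Measurable h) {B : ℝ}
    (hb : ∀ x, |h x| ≤ B) : Measurable (H.LP b t h) := by
  rw [LP_eq]
  exact Finset.measurable_fun_sum _ fun i _ => (H.U_meas _ ht hm hb).const_mul _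

lemma P_meas (b : ℕ) {t : ℝ} (ht : 0 < t) {h : M → ℝ} (hm : Measurable h) {B : ℝ}
    (hb : ∀ x, |h x| ≤ B) : Measurable (H.P b t h) := by
  rw [P_eq]
  exact Finset.measurable_fun_sum _ fun i _ => (H.U_meas _ ht hm hb).const_mul _

lemma Q_meas (b : ℕ) {t : ℝ} (ht : 0 < t) {h : M → ℝ} (hm : Measurable h) {B : ℝ}
    (hb : ∀ x, |h x| ≤ B) : Measurable (H.Q b t h) := by
  rw [Q_eq]
  exact (H.U_meas _ ht hm hb).const_mul _

lemma abs_coef (k j : ℕ) {t : ℝ} (ht : 0 < t) :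
    |((Nat.factorial k : ℝ))⁻¹ * (-1 : ℝ) ^ j * t ^ j| = ((Nat.factorial k : ℝ))⁻¹ * t ^ j := by
  rw [abs_mul, abs_mul, abs_pow, abs_neg, abs_one, one_pow, mul_one, abs_of_pos (pow_pos ht j),
    abs_of_nonneg (by positivity)]

lemma P_bound (b : ℕ) : ∃ C : ℝ, 0 < C ∧ ∀ t : ℝ, 0 < t → t ≤ 1 → ∀ (h : M → ℝ) (B : ℝ),
    Measurable h → (∀ x, |h x| ≤ B) → ∀ x, |H.P b t h x| ≤ C * B := by
  choose C hC hU using fun n => H.U_bound1 n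
  refine ⟨1 + ∑ k ∈ Finset.range b, ((Nat.factorial k : ℝ))⁻¹ * C k, ?_, ?_⟩
  · have : 0 ≤ ∑ k ∈ Finset.range b, ((Nat.factorial k : ℝ))⁻¹ * C k :=
      Finset.sum_nonneg fun k _ => by have := hC k; positivity
    linarith
  intro t ht ht1 h B hm hb x
  have hB : 0 ≤ B := (abs_nonneg _).trans (hb x)
  rw [P_eq, add_mul, one_mul, Finset.sum_mul]
  refine le_trans (Finset.abs_sum_le_sum_abs _ _) (le_trans (Finset.sum_le_sum fun k _ => ?_)
    (le_add_of_nonneg_left hB))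
  rw [abs_mul, abs_coef k k ht]
  have := hU k t ht ht1 h B hm hb x
  calc _ ≤ ((Nat.factorial k : ℝ))⁻¹ * t ^ k * (C k / t ^ k * B) := by gcongr
    _ = _ := by field_simp

/-- the estimate for the two terms of the paraproduct integrand -/
lemma inner_est (b : ℕ) (hb2 : 2 ≤ b) (m : ℕ) : ∃ C : ℝ, 0 < C ∧ ∀ s t : ℝ, 0 < s → s ≤ 1 →
    0 < t → t ≤ 1 → (1 ≤ m ∨ s = 1) →
    ∀ (h₁ h₂ : M → ℝ) (B : ℝ), Measurable h₁ → (∀ x, |h₁ x| ≤ B) → Measurable h₂ →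
      (∀ x, |h₂ x| ≤ B) → ∀ x,
      s ^ m * |H.U m s (fun y => H.LP b t h₁ y + H.Q (b - 1) t h₂ y) x| ≤ C * B * E s t := by
  choose! C hC hU using fun n => H.comp_bound' m n
  have hsum : 0 ≤ ∑ k ∈ Finset.range b, ((Nat.factorial k : ℝ))⁻¹ * C (k + 1) :=
      Finset.sum_nonneg fun k _ => by have := hC (k + 1) (by omega); positivity
  have hlast := hC (b - 1) (by omega)
  refine ⟨(∑ k ∈ Finset.range b, ((Nat.factorial k : ℝ))⁻¹ * C (k + 1)) + C (b - 1),
    by positivity, ?_⟩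
  intro s t hs hs1 ht ht1 hms h₁ h₂ B hm1 hB1 hm2 hB2 x
  have hB : 0 ≤ B := (abs_nonneg _).trans (hB1 x)
  choose K hK hKU using fun n => H.U_bound1 n
  have e : (fun y => H.LP b t h₁ y + H.Q (b - 1) t h₂ y) = fun y => ∑ i ∈ Finset.range (b + 1),
      (fun k => if k < b then (((Nat.factorial k : ℝ))⁻¹ * (-1 : ℝ) ^ (k + 1) * t ^ (k + 1)) else
        ((-1 : ℝ) ^ (b - 1) * t ^ (b - 1))) i *
      (fun k => if k < b then H.U (k + 1) t h₁ else H.U (b - 1) t h₂) i y := by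
    ext y
    rw [Finset.sum_range_succ, LP_eq, Q_eq]
    simp only [lt_irrefl, if_false]
    congr 1
    refine Finset.sum_congr rfl fun i hi => ?_
    rw [if_pos (Finset.mem_range.1 hi), if_pos (Finset.mem_range.1 hi)]
  rw [e, H.U_sum (Finset.range (b + 1)) m hs hs1 _ _ ?_
    (fun k => if k < b then K (k + 1) / t ^ (k + 1) * B else K (b - 1) / t ^ (b - 1) * B) ?_ x]
  · rw [Finset.sum_range_succ]
    simp only [lt_irrefl, if_false]
    have e2 : ∀ k ∈ Finset.range b, ((if k < b then
        (((Nat.factorial k : ℝ))⁻¹ * (-1 : ℝ) ^ (k + 1) * t ^ (k + 1)) else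
        ((-1 : ℝ) ^ (b - 1) * t ^ (b - 1)))) *
          H.U m s (if k < b then H.U (k + 1) t h₁ else H.U (b - 1) t h₂) x =
        (((Nat.factorial k : ℝ))⁻¹ * (-1 : ℝ) ^ (k + 1) * t ^ (k + 1)) *
          H.U m s (H.U (k + 1) t h₁) x := by
      intro k hk
      rw [if_pos (Finset.mem_range.1 hk), if_pos (Finset.mem_range.1 hk)]
    rw [Finset.sum_congr rfl e2]
    have hsm : 0 ≤ s ^ m := by positivity
    refine (mul_le_mul_of_nonneg_left (abs_add_le _ _) hsm).trans ?_
    rw [mul_add, add_mul, add_mul]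
    refine add_le_add ?_ ?_
    · refine (mul_le_mul_of_nonneg_left (Finset.abs_sum_le_sum_abs _ _) hsm).trans ?_
      rw [Finset.mul_sum, Finset.sum_mul, Finset.sum_mul]
      refine Finset.sum_le_sum fun k _ => ?_
      rw [abs_mul, abs_coef k (k + 1) ht]
      have h1 := hU (k + 1) (by omega) s t hs hs1 ht ht1 hms h₁ B hm1 hB1 x
      calc _ = ((Nat.factorial k : ℝ))⁻¹ *
            (s ^ m * t ^ (k + 1) * |H.U m s (H.U (k + 1) t h₁) x|) := by ring
        _ ≤ ((Nat.factorial k : ℝ))⁻¹ * (C (k + 1) * B * E s t) := by gcongr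
        _ = _ := by ring
    · have h1 := hU (b - 1) (by omega) s t hs hs1 ht ht1 hms h₂ B hm2 hB2 x
      rw [abs_mul, abs_mul, abs_pow, abs_neg, abs_one, one_pow, one_mul,
        abs_of_pos (pow_pos ht _), ← mul_assoc]
      exact h1
  · intro i _
    split_ifs
    · exact H.U_meas _ ht hm1 hB1
    · exact H.U_meas _ ht hm2 hB2
  · intro i _ z
    split_ifs
    · exact hKU _ t ht ht1 h₁ B hm1 hB1 z
    · exact hKU _ t ht ht1 h₂ B hm2 hB2 z

lemma ode_bound (u u' : ℝ → ℝ) {t K e : ℝ} (ht : 0 < t) (ht2 : t ≤ 2) (hK : 0 ≤ K) (he : e < 0)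
    (hd : ∀ r ∈ Icc t 2, HasDerivAt u (u' r) r)
    (hb : ∀ r ∈ Icc t 2, |u' r| ≤ K * r ^ (e - 1)) : |u t| ≤ |u 2| + K / (-e) * t ^ e := by
  have main : ∀ σ : ℝ, |σ| = 1 → σ * u t ≤ σ * u 2 + K / (-e) * t ^ e := by
    intro σ hσ
    have hd2 : ∀ r ∈ Icc t 2, HasDerivAt (fun r => σ * u r + K / e * r ^ e)
        (σ * u' r + K * r ^ (e - 1)) r := by
      intro r hr
      have hr0 : 0 < r := ht.trans_le hr.1
      have h1 := (Real.hasDerivAt_rpow_const (p := e) (Or.inl hr0.ne')).const_mul (K / e)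
      have h2 := ((hd r hr).const_mul σ).add h1
      refine h2.congr_deriv ?_
      have := he.ne
      field_simp
    have hmono : MonotoneOn (fun r => σ * u r + K / e * r ^ e) (Icc t 2) := by
      refine monotoneOn_of_deriv_nonneg (convex_Icc _ _)
        (fun r hr => (hd2 r hr).continuousAt.continuousWithinAt)
        (fun r hr => (hd2 r (interior_subset hr)).differentiableAt.differentiableWithinAt) ?_
      intro r hr
      have hr' := interior_subset hr
      rw [(hd2 r hr').deriv]
      have h1 := hb r hr'
      have h2 : |σ * u' r| = |u' r| := by rw [abs_mul, hσ, one_mul]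
      have h3 := neg_abs_le (σ * u' r)
      linarith
    have h := hmono (left_mem_Icc.2 ht2) (right_mem_Icc.2 ht2) ht2
    simp only at h
    have h4 : 0 ≤ K / (-e) * (2 : ℝ) ^ e := by
      have : 0 < -e := by linarith
      positivity
    have h5 : K / (-e) = - (K / e) := by rw [div_neg]
    rw [h5] at h4 ⊢
    nlinarith
  rw [abs_le']
  have h1 := main 1 (by simp)
  have h2 := main (-1) (by simp)
  have h3 := le_abs_self (u 2)
  have h4 := neg_abs_le (u 2)
  constructor <;> linarith

/-- bounds on all time derivatives from the Hölder norm -/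
def Claim (a : ℕ) (β : ℝ) (j : ℕ) : Prop := ∃ C : ℝ, 0 < C ∧ ∀ (f : M → ℝ) (B A : ℝ), Measurable f →
  (∀ x, |f x| ≤ B) → (∀ t : ℝ, 0 < t → t ≤ 1 → ∀ x, |H.U a t f x| ≤ A * t ^ (β - a)) →
  (∀ x, |H.S 1 f x| ≤ A) → ∀ t : ℝ, 0 < t → t ≤ 2 → ∀ x, |H.U j t f x| ≤ C * A * t ^ (β - j)

lemma claim_high (a : ℕ) (β : ℝ) (i : ℕ) : H.Claim a β (i + a) := by
  obtain ⟨C, hC, hU⟩ := H.U_bound1 i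
  refine ⟨C * (2⁻¹ : ℝ) ^ (β - (i + a : ℕ)), by positivity, ?_⟩
  intro f B A hm hb hA _ t ht ht2 x
  have ht' : 0 < t / 2 := by positivity
  have e := H.U_U i a ht' (by linarith) ht' hm hb x
  rw [add_halves] at e
  rw [← e]
  have h1 := hU (t / 2) ht' (by linarith) (H.U a (t / 2) f) _ (H.U_meas a ht' hm hb)
    (hA (t / 2) ht' (by linarith)) x
  refine h1.trans (le_of_eq ?_)
  have h2 : (t / 2) ^ (β - a) = (t / 2) ^ (β - (i + a : ℕ)) * (t / 2) ^ i := by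
    rw [← Real.rpow_natCast (t / 2) i, ← Real.rpow_add ht']
    congr 1; push_cast; ring
  have h3 : (t / 2) ^ (β - (i + a : ℕ)) = t ^ (β - (i + a : ℕ)) * (2⁻¹ : ℝ) ^ (β - (i + a : ℕ)) := by
    rw [div_eq_mul_inv, Real.mul_rpow ht.le (by norm_num)]
  rw [h2, h3]
  field_simp

lemma claim_low (a : ℕ) (β : ℝ) (hβ : β < 1) (d : ℕ) : ∀ j : ℕ, j + d = a → 1 ≤ j → H.Claim a β j := by
  induction d with
  | zero =>
    intro j hj _
    have := H.claim_high a β 0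
    rw [zero_add] at this
    rw [add_zero] at hj
    rwa [hj]
  | succ d ih =>
    intro j hj hj1
    obtain ⟨C, hC, hc⟩ := ih (j + 1) (by omega) (by omega)
    obtain ⟨C2, hC2, hU⟩ := H.U_bound1 j
    have hjr : (1 : ℝ) ≤ j := by exact_mod_cast hj1
    have he : β - j < 0 := by linarith
    have hne : 0 < -(β - j) := by linarith
    refine ⟨C2 * (2 : ℝ) ^ (-(β - j)) + C / (-(β - j)), by positivity, ?_⟩
    intro f B A hm hb hA hS t ht ht2 x
    have hA0 : 0 ≤ A := (abs_nonneg _).trans (hS x)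
    have h1 := ode_bound (fun r => H.U j r f x) (fun r => H.U (j + 1) r f x) (K := C * A)
      (e := β - j) ht ht2 (by positivity) he
      (fun r hr => H.U_hasDerivAt j (ht.trans_le hr.1) hm hb x)
      (fun r hr => by
        have := hc f B A hm hb hA hS r (ht.trans_le hr.1) hr.2 x
        convert this using 3
        push_cast; ring)
    have h2 : |H.U j 2 f x| ≤ C2 * A := by
      have h3 := hU 1 one_pos le_rfl (H.S 1 f) A (H.S_meas one_pos hm hb) hS x
      rw [H.U_S j one_pos one_pos hm hb, one_add_one_eq_two] at h3
      simpa using h3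
    have h4 : 1 ≤ (2 : ℝ) ^ (-(β - j)) * t ^ (β - j) := by
      have h5 : (2 : ℝ) ^ (β - j) ≤ t ^ (β - j) :=
        Real.rpow_le_rpow_of_nonpos ht ht2 he.le
      rw [Real.rpow_neg (by norm_num), inv_mul_eq_div, one_le_div (by positivity)]
      exact h5
    calc |H.U j t f x| ≤ C2 * A * 1 + C * A / (-(β - j)) * t ^ (β - j) := by linarith
      _ ≤ C2 * A * ((2 : ℝ) ^ (-(β - j)) * t ^ (β - j)) + C * A / (-(β - j)) * t ^ (β - j) := by
        gcongr
      _ = _ := by ring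

lemma claim_all (a : ℕ) (β : ℝ) (hβ : β < 1) (j : ℕ) (hj : 1 ≤ j) : H.Claim a β j := by
  rcases le_total j a with h | h
  · exact H.claim_low a β hβ (a - j) j (by omega) hj
  · have := H.claim_high a β (j - a)
    rwa [Nat.sub_add_cancel h] at this

lemma LP_bound (b a : ℕ) (β : ℝ) (hβ : β < 1) : ∃ C : ℝ, 0 < C ∧ ∀ (f : M → ℝ) (B A : ℝ), Measurable f →
    (∀ x, |f x| ≤ B) → (∀ t : ℝ, 0 < t → t ≤ 1 → ∀ x, |H.U a t f x| ≤ A * t ^ (β - a)) →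
    (∀ x, |H.S 1 f x| ≤ A) → ∀ t : ℝ, 0 < t → t ≤ 1 → ∀ x, |H.LP b t f x| ≤ C * A * t ^ β := by
  choose! C hC hU using fun j => H.claim_all a β hβ j
  refine ⟨1 + ∑ k ∈ Finset.range b, ((Nat.factorial k : ℝ))⁻¹ * C (k + 1), ?_, ?_⟩
  · have : 0 ≤ ∑ k ∈ Finset.range b, ((Nat.factorial k : ℝ))⁻¹ * C (k + 1) :=
      Finset.sum_nonneg fun k _ => by have := hC (k + 1) (by omega); positivity
    linarith
  intro f B A hm hb hA hS t ht ht1 x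
  have hA0 : 0 ≤ A := (abs_nonneg _).trans (hS x)
  rw [LP_eq, add_mul, add_mul, one_mul, Finset.sum_mul, Finset.sum_mul]
  refine le_trans (Finset.abs_sum_le_sum_abs _ _) (le_trans (Finset.sum_le_sum fun k _ => ?_)
    (le_add_of_nonneg_left (by positivity)))
  rw [abs_mul, abs_coef k (k + 1) ht]
  have := hU (k + 1) (by omega) f B A hm hb hA hS t ht (by linarith) x
  calc _ ≤ ((Nat.factorial k : ℝ))⁻¹ * t ^ (k + 1) * (C (k + 1) * A * t ^ (β - (k + 1 : ℕ))) := by gcongr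
    _ = ((Nat.factorial k : ℝ))⁻¹ * C (k + 1) * A * (t ^ (β - (k + 1 : ℕ)) * t ^ (k + 1)) := by ring
    _ = _ := by
      rw [← Real.rpow_natCast t (k + 1), ← Real.rpow_add ht]
      congr 2; ring

lemma exp_log_pos (t : ℝ) : 0 < Real.exp (Real.log t) := Real.exp_pos _

lemma kd_joint (n : ℕ) : Measurable (fun q : ℝ × (M × M) =>
    H.kd n (Real.exp (Real.log q.1)) q.2.1 q.2.2) := by
  have h1 : Measurable (Function.uncurry (fun (τ : ℝ) (q : M × M) =>
      H.kd n (Real.exp τ) q.1 q.2)) := by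
    refine measurable_uncurry_of_continuous_of_measurable ?_ ?_
    · intro q
      rw [continuous_iff_continuousAt]
      intro τ
      exact ContinuousAt.comp (f := Real.exp) (g := fun s => H.kd n s q.1 q.2)
        (H.kd_hasDerivAt n (Real.exp_pos τ) q.1 q.2).continuousAt Real.continuous_exp.continuousAt
    · intro τ
      exact H.kd_meas n (Real.exp_pos τ)
  exact h1.comp ((Real.measurable_log.comp measurable_fst).prodMk measurable_snd)

/-- families of bounded functions, jointly measurable in time and space -/
def Good (w : ℝ → M → ℝ) : Prop :=
  Measurable (fun q : ℝ × M => w (Real.exp (Real.log q.1)) q.2) ∧ ∀ t : ℝ, 0 < t → ∃ B, ∀ x, |w t x| ≤ B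

lemma Good.meas {w : ℝ → M → ℝ} (hw : Good w) {t : ℝ} (ht : 0 < t) : Measurable (w t) := by
  have := hw.1.comp (measurable_prodMk_left (x := t))
  simpa only [Function.comp_def, Real.exp_log ht] using this

lemma Good.const {f : M → ℝ} (hm : Measurable f) {B : ℝ} (hb : ∀ x, |f x| ≤ B) :
    Good (fun _ => f) := ⟨hm.comp measurable_snd, fun _ _ => ⟨B, hb⟩⟩

lemma Good.U (n : ℕ) {w : ℝ → M → ℝ} (hw : Good w) : Good (fun t => H.U n t (w t)) := by
  have := H.sigmaFinite
  constructor
  · have e : (fun q : ℝ × M => H.U n (Real.exp (Real.log q.1)) (w (Real.exp (Real.log q.1))) q.2)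
      = fun q : ℝ × M => ∫ y, H.kd n (Real.exp (Real.log q.1)) q.2 y *
          w (Real.exp (Real.log q.1)) y ∂H.μ := by
      ext q
      obtain ⟨B, hB⟩ := hw.2 _ (exp_log_pos q.1)
      exact H.U_eq n (exp_log_pos q.1) (hw.meas (exp_log_pos q.1)) hB q.2
    rw [e]
    refine (StronglyMeasurable.integral_prod_right (f := fun (q : ℝ × M) y =>
      H.kd n (Real.exp (Real.log q.1)) q.2 y * w (Real.exp (Real.log q.1)) y) ?_).measurable
    refine Measurable.stronglyMeasurable (Measurable.mul ?_ ?_)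
    · exact (H.kd_joint n).comp ((measurable_fst.comp measurable_fst).prodMk
        ((measurable_snd.comp measurable_fst).prodMk measurable_snd))
    · exact hw.1.comp ((measurable_fst.comp measurable_fst).prodMk measurable_snd)
  · intro t ht
    obtain ⟨B, hB⟩ := hw.2 t ht
    obtain ⟨C, _, hU⟩ := H.U_bound2 n
    exact ⟨_, hU t ht (w t) B (hw.meas ht) hB⟩

lemma Good.mul {w v : ℝ → M → ℝ} (hw : Good w) (hv : Good v) : Good (fun t x => w t x * v t x) := by
  refine ⟨hw.1.mul hv.1, fun t ht => ?_⟩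
  obtain ⟨B, hB⟩ := hw.2 t ht
  obtain ⟨B', hB'⟩ := hv.2 t ht
  refine ⟨B * B', fun x => ?_⟩
  rw [abs_mul]
  exact mul_le_mul (hB x) (hB' x) (abs_nonneg _) ((abs_nonneg _).trans (hB x))

lemma Good.add {w v : ℝ → M → ℝ} (hw : Good w) (hv : Good v) : Good (fun t x => w t x + v t x) := by
  refine ⟨hw.1.add hv.1, fun t ht => ?_⟩
  obtain ⟨B, hB⟩ := hw.2 t ht
  obtain ⟨B', hB'⟩ := hv.2 t ht
  exact ⟨B + B', fun x => (abs_add_le _ _).trans (add_le_add (hB x) (hB' x))⟩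

lemma Good.pow_mul {w : ℝ → M → ℝ} (hw : Good w) (c : ℝ) (n : ℕ) :
    Good (fun t x => (c * t ^ n) * w t x) := by
  refine ⟨Measurable.mul ?_ hw.1, fun t ht => ?_⟩
  · exact ((Real.measurable_exp.comp (Real.measurable_log.comp measurable_fst)).pow_const n).const_mul c
  obtain ⟨B, hB⟩ := hw.2 t ht
  refine ⟨|c * t ^ n| * B, fun x => ?_⟩
  rw [abs_mul]
  exact mul_le_mul_of_nonneg_left (hB x) (abs_nonneg _)

lemma Good.sum {ι : Type*} (F : Finset ι) {w : ι → ℝ → M → ℝ} (hw : ∀ i, Good (w i)) :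
    Good (fun t x => ∑ i ∈ F, w i t x) := by
  classical
  induction F using Finset.induction_on with
  | empty =>
    simp only [Finset.sum_empty]
    exact ⟨measurable_const, fun t _ => ⟨0, by simp⟩⟩
  | insert i F hi ih =>
    simp only [Finset.sum_insert hi]
    exact (hw i).add ih

lemma Good.LP (b : ℕ) {w : ℝ → M → ℝ} (hw : Good w) : Good (fun t => H.LP b t (w t)) := by
  simp only [LP_eq]
  exact Good.sum _ fun k => (Good.U H (k + 1) hw).pow_mul _ _

lemma Good.P (b : ℕ) {w : ℝ → M → ℝ} (hw : Good w) : Good (fun t => H.P b t (w t)) := by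
  simp only [P_eq]
  exact Good.sum _ fun k => (Good.U H k hw).pow_mul _ _

lemma Good.Q (b : ℕ) {w : ℝ → M → ℝ} (hw : Good w) : Good (fun t => H.Q b t (w t)) := by
  simp only [Q_eq]
  exact (Good.U H b hw).pow_mul _ _

lemma Good.paraInner (b : ℕ) {f g : M → ℝ} {F G : ℝ} (hf : Measurable f) (hF : ∀ x, |f x| ≤ F)
    (hg : Measurable g) (hG : ∀ x, |g x| ≤ G) : Good (H.paraInner b g f) := by
  have gf := Good.const hf hF
  have gg := Good.const hg hG
  exact (Good.LP H b ((Good.Q H (b - 1) gf).mul (Good.P H b gg))).add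
    (Good.Q H (b - 1) ((Good.LP H b gf).mul (Good.P H b gg)))

lemma Good.U_fixed (m : ℕ) {s : ℝ} (hs : 0 < s) {w : ℝ → M → ℝ} (hw : Good w) (x : M) :
    Measurable (fun t : ℝ => H.U m s (w (Real.exp (Real.log t))) x) := by
  have := H.sigmaFinite
  have e : (fun t : ℝ => H.U m s (w (Real.exp (Real.log t))) x)
      = fun t : ℝ => ∫ y, H.kd m s x y * w (Real.exp (Real.log t)) y ∂H.μ := by
    ext t
    obtain ⟨B, hB⟩ := hw.2 _ (exp_log_pos t)
    exact H.U_eq m hs (hw.meas (exp_log_pos t)) hB x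
  rw [e]
  refine (StronglyMeasurable.integral_prod_right (f := fun (t : ℝ) y =>
    H.kd m s x y * w (Real.exp (Real.log t)) y) ?_).measurable
  exact (((H.kd_meas_right m hs x).comp measurable_snd).mul hw.1).stronglyMeasurable

lemma time_integral (β : ℝ) (h1 : -1 < β) (h2 : β < 1) : ∃ K : ℝ, 0 < K ∧ ∀ s : ℝ, 0 < s → s ≤ 1 →
    ∃ Φ : ℝ → ℝ, Integrable Φ ∧ (∀ t, 0 ≤ Φ t) ∧ ∫ t, Φ t ≤ K * s ^ β ∧
      ∀ t ∈ Ioc (0 : ℝ) 1, E s t * t ^ β / t ≤ Φ t := by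
  have hp1 : 0 < β + 1 := by linarith
  have hp2 : 0 < 1 - β := by linarith
  refine ⟨1 / (β + 1) + 1 / (1 - β), by positivity, ?_⟩
  intro s hs hs1
  have i1 : IntegrableOn (fun t : ℝ => s⁻¹ * t ^ β) (Ioc 0 s) := by
    have := (intervalIntegral.intervalIntegrable_rpow' (a := 0) (b := s) h1)
    rw [intervalIntegrable_iff_integrableOn_Ioc_of_le hs.le] at this
    exact this.const_mul _
  have i2 : IntegrableOn (fun t : ℝ => s * t ^ (β - 2)) (Ioi s) :=
    (integrableOn_Ioi_rpow_of_lt (by linarith) hs).const_mul _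
  refine ⟨fun t => (Ioc 0 s).indicator (fun t : ℝ => s⁻¹ * t ^ β) t +
    (Ioi s).indicator (fun t : ℝ => s * t ^ (β - 2)) t,
    (i1.integrable_indicator measurableSet_Ioc).add (i2.integrable_indicator measurableSet_Ioi),
    ?_, ?_, ?_⟩
  · intro t
    refine add_nonneg (indicator_nonneg ?_ t) (indicator_nonneg ?_ t)
    · intro r hr
      have := hr.1
      positivity
    · intro r hr
      have : 0 < r := hs.trans hr
      positivity
  · rw [integral_add (i1.integrable_indicator measurableSet_Ioc)
      (i2.integrable_indicator measurableSet_Ioi), integral_indicator measurableSet_Ioc,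
      integral_indicator measurableSet_Ioi, integral_const_mul, integral_const_mul,
      integral_Ioi_rpow_of_lt (by linarith) hs, ← intervalIntegral.integral_of_le hs.le,
      integral_rpow (Or.inl h1), Real.zero_rpow hp1.ne', sub_zero]
    have e1 : s ^ (β + 1) = s ^ β * s := by rw [Real.rpow_add hs, Real.rpow_one]
    have e2 : s ^ (β - 2 + 1) = s ^ β / s := by
      rw [show β - 2 + 1 = β - 1 by ring, Real.rpow_sub hs, Real.rpow_one]
    rw [e1, e2]
    have e3 : β - 2 + 1 = -(1 - β) := by ring
    rw [e3]
    apply le_of_eq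
    field_simp
  · intro t ht
    have ht0 := ht.1
    unfold E
    beta_reduce
    split_ifs with hts
    · rw [indicator_of_mem (show t ∈ Ioc 0 s from ⟨ht0, hts⟩),
        indicator_of_notMem (by simpa using hts), add_zero]
      apply le_of_eq
      field_simp
    · push Not at hts
      rw [indicator_of_mem (show t ∈ Ioi s from hts),
        indicator_of_notMem (by simp [hts]), zero_add, Real.rpow_sub ht0]
      apply le_of_eq
      rw [show (2 : ℝ) = ((2 : ℕ) : ℝ) by norm_num, Real.rpow_natCast]
      field_simp

/-- the core estimate, for real bounds -/
lemma core (b : ℕ) (hb2 : 2 ≤ b) (β : ℝ) (h1 : -1 < β) (h2 : β < 1) (m : ℕ) : ∃ C : ℝ, 0 < C ∧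
    ∀ (f g : M → ℝ) (F A G : ℝ), Measurable f → (∀ x, |f x| ≤ F) →
    (∀ t : ℝ, 0 < t → t ≤ 1 → ∀ x, |H.U (b - 1) t f x| ≤ A * t ^ (β - (b - 1 : ℕ))) →
    (∀ x, |H.S 1 f x| ≤ A) → Measurable g → (∀ x, |g x| ≤ G) →
    ∀ s : ℝ, 0 < s → s ≤ 1 → (1 ≤ m ∨ s = 1) → ∀ x,
      IntegrableOn (fun t => H.Q m s (H.paraInner b g f t) x / t) (Ioc 0 1) ∧
      |∫ t in Ioc (0 : ℝ) 1, H.Q m s (H.paraInner b g f t) x / t| ≤ C * A * G * s ^ β := by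
  obtain ⟨C1, hC1, hin⟩ := H.inner_est b hb2 m
  obtain ⟨C2, hC2, hP⟩ := H.P_bound b
  obtain ⟨C3, hC3, hLP⟩ := H.LP_bound b (b - 1) β h2
  obtain ⟨K, hK, hint⟩ := time_integral β h1 h2
  refine ⟨C1 * ((1 + C3) * C2) * K, by positivity, ?_⟩
  intro f g F A G hf hF hA hS hg hG s hs hs1 hms x
  have hA0 : 0 ≤ A := (abs_nonneg _).trans (hS x)
  have hG0 : 0 ≤ G := (abs_nonneg _).trans (hG x)
  obtain ⟨Φ, hΦi, hΦ0, hΦK, hΦ⟩ := hint s hs hs1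
  have hgood := Good.paraInner H b hf hF hg hG
  set D := C1 * ((1 + C3) * C2) * A * G with hD
  have hD0 : 0 ≤ D := by positivity
  have hbd : ∀ t ∈ Ioc (0 : ℝ) 1, ‖H.Q m s (H.paraInner b g f t) x / t‖ ≤ D * Φ t := by
    intro t ht
    obtain ⟨ht0, ht1⟩ := ht
    have hPg := hP t ht0 ht1 g G hg hG
    have hQf : ∀ z, |H.Q (b - 1) t f z| ≤ A * t ^ β := by
      intro z
      rw [Q_eq]
      simp only
      rw [abs_mul, abs_mul, abs_pow, abs_neg, abs_one, one_pow, one_mul, abs_of_pos (pow_pos ht0 _)]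
      calc _ ≤ t ^ (b - 1) * (A * t ^ (β - (b - 1 : ℕ))) := by gcongr; exact hA t ht0 ht1 z
        _ = A * (t ^ (β - (b - 1 : ℕ)) * t ^ (b - 1)) := by ring
        _ = _ := by
          rw [← Real.rpow_natCast t (b - 1), ← Real.rpow_add ht0]
          congr 2; ring
    have hLf := hLP f F A hf hF hA hS t ht0 ht1
    have htβ : 0 < t ^ β := Real.rpow_pos_of_pos ht0 _
    have hmP := H.P_meas b ht0 hg hG
    have key := hin s t hs hs1 ht0 ht1 hms (fun z => H.Q (b - 1) t f z * H.P b t g z)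
      (fun z => H.LP b t f z * H.P b t g z) ((1 + C3) * C2 * A * G * t ^ β)
      ((H.Q_meas (b - 1) ht0 hf hF).mul hmP) ?_ ((H.LP_meas b ht0 hf hF).mul hmP) ?_ x
    · change s ^ m * |H.U m s (H.paraInner b g f t) x| ≤ _ at key
      rw [norm_div, Real.norm_of_nonneg ht0.le, Q_eq]
      simp only
      rw [Real.norm_eq_abs, abs_mul, abs_mul, abs_pow, abs_neg, abs_one, one_pow, one_mul,
        abs_of_pos (pow_pos hs _)]
      calc _ ≤ C1 * ((1 + C3) * C2 * A * G * t ^ β) * E s t / t := by gcongr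
        _ = D * (E s t * t ^ β / t) := by rw [hD]; ring
        _ ≤ _ := by gcongr; exact hΦ t ⟨ht0, ht1⟩
    · intro z
      rw [abs_mul]
      calc _ ≤ (A * t ^ β) * (C2 * G) := by gcongr; exacts [hQf z, hPg z]
        _ = 1 * (C2 * A * G * t ^ β) := by ring
        _ ≤ (1 + C3) * (C2 * A * G * t ^ β) := by gcongr; linarith
        _ = _ := by ring
    · intro z
      rw [abs_mul]
      calc _ ≤ (C3 * A * t ^ β) * (C2 * G) := by gcongr; exacts [hLf z, hPg z]
        _ = C3 * (C2 * A * G * t ^ β) := by ring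
        _ ≤ (1 + C3) * (C2 * A * G * t ^ β) := by gcongr; linarith
        _ = _ := by ring
  have hmeas : AEStronglyMeasurable (fun t => H.Q m s (H.paraInner b g f t) x / t)
      (volume.restrict (Ioc 0 1)) := by
    have hm0 : Measurable (fun t : ℝ => ((-1 : ℝ) ^ m * s ^ m) *
        H.U m s (H.paraInner b g f (Real.exp (Real.log t))) x / t) :=
      ((Good.U_fixed H m hs hgood x).const_mul _).div measurable_id
    refine hm0.aestronglyMeasurable.congr ?_
    filter_upwards [ae_restrict_mem measurableSet_Ioc] with t ht
    rw [Real.exp_log ht.1]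
    rfl
  have hae : ∀ᵐ t ∂(volume.restrict (Ioc (0 : ℝ) 1)),
      ‖H.Q m s (H.paraInner b g f t) x / t‖ ≤ D * Φ t := by
    filter_upwards [ae_restrict_mem measurableSet_Ioc] with t ht using hbd t ht
  have hDi : Integrable (fun t => D * Φ t) := hΦi.const_mul D
  refine ⟨Integrable.mono' hDi.integrableOn hmeas hae, ?_⟩
  have h3 := norm_integral_le_of_norm_le hDi.integrableOn hae
  calc _ ≤ ∫ t in Ioc (0 : ℝ) 1, D * Φ t := h3
    _ ≤ ∫ t, D * Φ t := setIntegral_le_integral hDi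
        (by filter_upwards with t using mul_nonneg hD0 (hΦ0 t))
    _ = D * ∫ t, Φ t := integral_const_mul _ _
    _ ≤ D * (K * s ^ β) := by gcongr
    _ = _ := by rw [hD]; ring

lemma abs_le_supNorm {h : M → ℝ} (hh : supNorm h < ⊤) (x : M) : |h x| ≤ (supNorm h).toReal := by
  have h1 : ‖h x‖ₑ ≤ supNorm h := le_iSup (fun x => (‖h x‖₊ : ℝ≥0∞)) x
  have h2 := ENNReal.toReal_mono hh.ne h1
  simpa using h2

lemma supNorm_le {h : M → ℝ} {B : ℝ} (hb : ∀ x, |h x| ≤ B) : supNorm h ≤ ENNReal.ofReal B := by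
  refine iSup_le fun x => ?_
  change ‖h x‖ₑ ≤ _
  rw [Real.enorm_eq_ofReal_abs]
  exact ENNReal.ofReal_le_ofReal (hb x)

end helpers

end HeatKernelSetup

/-- **Proposition 3.2, first estimate.** For `b ≥ 2` and `α ∈ (-2,1)`, the
paraproduct `Π_g^{(b)}(f)` (whose frequency pieces `Q_s^{(b-1)} Π_g^{(b)}(f)` and
`e^{-L} Π_g^{(b)}(f)` are defined by applying the operators under the time integral, each
`dt/t`-integral converging absolutely) satisfies `‖Π_g^{(b)}(f)‖_{C^α} ≤ C ‖g‖_∞ ‖f‖_{C^α}`. -/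
theorem paraproduct_estimate_bounded
    {M : Type*} [MeasurableSpace M] [MetricSpace M] (H : HeatKernelSetup M)
    (b : ℕ) (hb : 2 ≤ b) (α : ℝ) (hα : α ∈ Set.Ioo (-2 : ℝ) 1) :
    ∃ C, 0 < C ∧ ∀ f g : M → ℝ,
      Measurable f → supNorm f < ⊤ → H.CNorm (b - 1) α f < ⊤ →
      Measurable g → supNorm g < ⊤ →
      (∀ s ∈ Set.Ioc (0 : ℝ) 1, ∀ x : M,
        IntegrableOn (fun t => H.Q (b - 1) s (H.paraInner b g f t) x / t) (Set.Ioc 0 1)) ∧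
      (∀ x : M,
        IntegrableOn (fun t => H.S 1 (H.paraInner b g f t) x / t) (Set.Ioc 0 1)) ∧
      supNorm (H.paraS b g f) +
          (⨆ s ∈ Set.Ioc (0 : ℝ) 1,
            ENNReal.ofReal (s ^ (-α / 2)) * supNorm (H.paraQ b (b - 1) g f s))
        ≤ ENNReal.ofReal C * supNorm g * H.CNorm (b - 1) α f := by
  obtain ⟨hα1, hα2⟩ := hα
  obtain ⟨C1, hC1, h1⟩ := H.core b hb (α / 2) (by linarith) (by linarith) (b - 1)
  obtain ⟨C2, hC2, h2⟩ := H.core b hb (α / 2) (by linarith) (by linarith) 0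
  set γ := |(gammaInt b)⁻¹| with hγ
  refine ⟨γ * C2 + γ * C1 + 1, by positivity, ?_⟩
  intro f g hf hfb hfC hg hgb
  set A := (H.CNorm (b - 1) α f).toReal with hA
  set G := (supNorm g).toReal with hG
  have hA0 : 0 ≤ A := ENNReal.toReal_nonneg
  have hG0 : 0 ≤ G := ENNReal.toReal_nonneg
  have hAS : ∀ x, |H.S 1 f x| ≤ A := by
    intro x
    have hle : supNorm (H.S 1 f) ≤ H.CNorm (b - 1) α f := le_self_add
    exact (HeatKernelSetup.abs_le_supNorm (hle.trans_lt hfC) x).trans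
      (ENNReal.toReal_mono hfC.ne hle)
  have hAU : ∀ t : ℝ, 0 < t → t ≤ 1 → ∀ x,
      |H.U (b - 1) t f x| ≤ A * t ^ (α / 2 - (b - 1 : ℕ)) := by
    intro t ht ht1 x
    have hle : ENNReal.ofReal (t ^ (-α / 2)) * ‖H.Q (b - 1) t f x‖ₑ ≤ H.CNorm (b - 1) α f := by
      refine le_trans ?_ (le_add_self :
        (⨆ t ∈ Set.Ioc (0 : ℝ) 1, ENNReal.ofReal (t ^ (-α / 2)) * supNorm (H.Q (b - 1) t f)) ≤ _)
      refine le_trans ?_ (le_iSup₂ (f := fun (t : ℝ) (_ : t ∈ Set.Ioc (0 : ℝ) 1) =>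
        ENNReal.ofReal (t ^ (-α / 2)) * supNorm (H.Q (b - 1) t f)) t ⟨ht, ht1⟩)
      gcongr
      exact le_iSup (fun x => (‖H.Q (b - 1) t f x‖₊ : ℝ≥0∞)) x
    have h3 := ENNReal.toReal_mono hfC.ne hle
    rw [ENNReal.toReal_mul, ENNReal.toReal_ofReal (by positivity), toReal_enorm,
      Real.norm_eq_abs, HeatKernelSetup.Q_eq] at h3
    simp only at h3
    rw [abs_mul, abs_mul, abs_pow, abs_neg, abs_one, one_pow, one_mul,
      abs_of_pos (pow_pos ht _)] at h3
    have e1 : t ^ (-α / 2) = (t ^ (α / 2))⁻¹ := by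
      rw [neg_div, Real.rpow_neg ht.le]
    rw [Real.rpow_sub ht, Real.rpow_natCast, ← mul_div_assoc, le_div_iff₀ (by positivity)]
    rw [e1, inv_mul_le_iff₀ (by positivity)] at h3
    linarith
  have hF := HeatKernelSetup.abs_le_supNorm hfb
  have hGb := HeatKernelSetup.abs_le_supNorm hgb
  have hQ0 : ∀ (h : M → ℝ) x, H.Q 0 1 h x = H.S 1 h x := by
    intro h x; simp [HeatKernelSetup.Q]
  have r1 := fun s (hs : s ∈ Set.Ioc (0 : ℝ) 1) x =>
    h1 f g _ A G hf hF hAU hAS hg hGb s hs.1 hs.2 (Or.inl (by omega)) x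
  have r2 := fun x => h2 f g _ A G hf hF hAU hAS hg hGb 1 one_pos le_rfl (Or.inr rfl) x
  simp only [hQ0, Real.one_rpow, mul_one] at r2
  refine ⟨fun s hs x => (r1 s hs x).1, fun x => (r2 x).1, ?_⟩
  have hfin : ENNReal.ofReal (γ * C2 + γ * C1 + 1) * supNorm g * H.CNorm (b - 1) α f
      = ENNReal.ofReal ((γ * C2 + γ * C1 + 1) * G * A) := by
    rw [ENNReal.ofReal_mul (by positivity), ENNReal.ofReal_mul (by positivity),
      ENNReal.ofReal_toReal hgb.ne, ENNReal.ofReal_toReal hfC.ne]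
  rw [hfin]
  have b1 : supNorm (H.paraS b g f) ≤ ENNReal.ofReal (γ * C2 * G * A) := by
    refine HeatKernelSetup.supNorm_le fun x => ?_
    unfold HeatKernelSetup.paraS
    rw [abs_mul]
    calc _ ≤ γ * (C2 * A * G) := by gcongr; exact (r2 x).2
      _ = _ := by ring
  have b2 : (⨆ s ∈ Set.Ioc (0 : ℝ) 1,
      ENNReal.ofReal (s ^ (-α / 2)) * supNorm (H.paraQ b (b - 1) g f s))
      ≤ ENNReal.ofReal (γ * C1 * G * A) := by
    refine iSup₂_le fun s hs => ?_
    have hs0 := hs.1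
    have h4 : supNorm (H.paraQ b (b - 1) g f s) ≤ ENNReal.ofReal (γ * (C1 * A * G * s ^ (α / 2))) := by
      refine HeatKernelSetup.supNorm_le fun x => ?_
      unfold HeatKernelSetup.paraQ
      rw [abs_mul]
      gcongr
      exact (r1 s hs x).2
    refine (mul_le_mul_right h4 _).trans ?_
    rw [← ENNReal.ofReal_mul (by positivity)]
    apply ENNReal.ofReal_le_ofReal
    rw [neg_div, Real.rpow_neg hs0.le]
    apply le_of_eq
    field_simp
  calc _ ≤ ENNReal.ofReal (γ * C2 * G * A) + ENNReal.ofReal (γ * C1 * G * A) := add_le_add b1 b2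
    _ = ENNReal.ofReal (γ * C2 * G * A + γ * C1 * G * A) :=
      (ENNReal.ofReal_add (by positivity) (by positivity)).symm
    _ ≤ _ := by
      apply ENNReal.ofReal_le_ofReal
      have : 0 ≤ G * A := by positivity
      nlinarith
end
end

section
/- Let d ≥ 2 be a real number and b ≥ 2 + d/2 an integer. For r ∈ (0,1] and s > 0 define A(r,s) := ∫_0^1 ∫_0^1 (r/(r+t₁))^b·(r/(r+t₂))^b·( t₁t₂ / ((t₁+s)(t₂+s)) )^{1/2}·(s+t₁+t₂)^{−d/2}·(r+t₁+t₂)^{−d/2} dt₁/t₁ dt₂/t₂. Then there is a constant C, depending only on d and b, such that for all r ∈ (0,1] and s > 0: A(r,s) ≤ C·( r/(s+r) )·(rs)^{−d/2}·( 1 + log( (s+r)/s ) ). (Lemma A.4, the key integral estimate in the renormalization of the parabolic Anderson model.) -/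
open MeasureTheory Set
open scoped ENNReal

noncomputable section

lemma aux_g (c : ℝ) (hc : 0 < c) :
    IntegrableOn (fun t : ℝ => c / (c + t) / Real.sqrt t) (Ioc 0 1) ∧
    ∫ t in Ioc (0:ℝ) 1, c / (c + t) / Real.sqrt t ≤ Real.pi * Real.sqrt c := by
  have hsc : 0 < Real.sqrt c := Real.sqrt_pos.2 hc
  have hcont : ContinuousOn
      (fun t : ℝ => 2 * Real.sqrt c * Real.arctan (Real.sqrt t / Real.sqrt c)) (Icc 0 1) := by
    apply Continuous.continuousOn
    exact continuous_const.mul (Real.continuous_arctan.comp (Real.continuous_sqrt.div_const _))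
  have hder : ∀ t ∈ Ioo (0:ℝ) 1,
      HasDerivAt (fun t : ℝ => 2 * Real.sqrt c * Real.arctan (Real.sqrt t / Real.sqrt c))
        (c / (c + t) / Real.sqrt t) t := by
    intro t ht
    have h0 : 0 < t := ht.1
    have hst : 0 < Real.sqrt t := Real.sqrt_pos.2 h0
    have h1 := (((Real.hasDerivAt_sqrt h0.ne').div_const (Real.sqrt c)).arctan).const_mul
      (2 * Real.sqrt c)
    refine h1.congr_deriv ?_
    rw [div_pow, Real.sq_sqrt h0.le, Real.sq_sqrt hc.le]
    field_simp
  have hint : IntegrableOn (fun t : ℝ => c / (c + t) / Real.sqrt t) (Ioc 0 1) := by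
    apply intervalIntegral.integrableOn_deriv_of_nonneg hcont hder
    intro t ht
    have h0 : 0 < t := ht.1
    positivity
  refine ⟨hint, ?_⟩
  rw [← intervalIntegral.integral_of_le zero_le_one,
    intervalIntegral.integral_eq_sub_of_hasDerivAt_of_le zero_le_one hcont hder
      ((intervalIntegrable_iff_integrableOn_Ioc_of_le zero_le_one).2 hint)]
  have := Real.arctan_lt_pi_div_two (Real.sqrt 1 / Real.sqrt c)
  simp only [Real.sqrt_zero, zero_div, Real.arctan_zero, mul_zero, sub_zero]
  nlinarith

lemma aux_h (r s t : ℝ) (hr : 0 < r) (hs : 0 < s) (ht : 0 < t) (b : ℕ) (hb : 1 ≤ b) :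
    (r / (r + t)) ^ b * Real.sqrt (t / (t + s)) * Real.sqrt (s / (s + t)) ≤
      (r * s / (r + s)) / (r * s / (r + s) + t) / Real.sqrt t * t / Real.sqrt s := by
  have hst : 0 < Real.sqrt t := Real.sqrt_pos.2 ht
  have hss : 0 < Real.sqrt s := Real.sqrt_pos.2 hs
  have h1 : (r / (r + t)) ^ b ≤ r / (r + t) := by
    apply pow_le_of_le_one (by positivity) _ (by omega)
    rw [div_le_one (by positivity)]; linarith
  have h2 : Real.sqrt (t / (t + s)) * Real.sqrt (s / (s + t))
      = Real.sqrt t * Real.sqrt s / (s + t) := by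
    rw [Real.sqrt_div ht.le, Real.sqrt_div hs.le, add_comm t s, div_mul_div_comm,
      Real.mul_self_sqrt (by positivity)]
  rw [mul_assoc, h2]
  have h3 : r / (r + t) * (s / (s + t)) ≤ (r * s / (r + s)) / (r * s / (r + s) + t) := by
    rw [div_mul_div_comm, div_le_div_iff₀ (by positivity) (by positivity)]
    have : r * s / (r + s) * ((r + t) * (s + t)) - r * s * (r * s / (r + s) + t)
      = r * s * t ^ 2 / (r + s) := by field_simp; ring
    have : 0 ≤ r * s * t ^ 2 / (r + s) := by positivity
    linarith
  calc _ ≤ r / (r + t) * (Real.sqrt t * Real.sqrt s / (s + t)) := by gcongr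
    _ = r / (r + t) * (s / (s + t)) * (Real.sqrt t / Real.sqrt s) := by
      have := Real.sq_sqrt hs.le
      field_simp
      rw [this]
    _ ≤ (r * s / (r + s)) / (r * s / (r + s) + t) * (Real.sqrt t / Real.sqrt s) := by gcongr
    _ = _ := by
      have := Real.sq_sqrt ht.le
      field_simp
      rw [this]

lemma aux_pow (s x y a : ℝ) (hs : 0 < s) (hx : 0 < x) (hy : 0 < y) (ha : 1 ≤ a) :
    (s + x + y) ^ (-a) ≤ s ^ (-a) * (Real.sqrt (s / (s + x)) * Real.sqrt (s / (s + y))) := by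
  have h1 : (s + x + y) ^ (-a) = s ^ (-a) * (s / (s + x + y)) ^ a := by
    rw [Real.div_rpow hs.le (by positivity), Real.rpow_neg hs.le, Real.rpow_neg (by positivity)]
    have : 0 < s ^ a := by positivity
    field_simp
  rw [h1]
  gcongr
  calc (s / (s + x + y)) ^ a ≤ (s / (s + x + y)) ^ (1:ℝ) := by
        apply Real.rpow_le_rpow_of_exponent_ge (by positivity) _ ha
        rw [div_le_one (by positivity)]; linarith
    _ = s / (s + x + y) := Real.rpow_one _
    _ ≤ _ := by
      rw [← Real.sqrt_mul (by positivity)]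
      apply Real.le_sqrt_of_sq_le
      rw [div_pow, div_mul_div_comm, ← pow_two]
      gcongr
      nlinarith [mul_pos hs hx, mul_pos hs hy, mul_pos hx hy]

lemma aux_pt (d : ℝ) (hd : 2 ≤ d) (b : ℕ) (hb : 1 ≤ b) (r s x y : ℝ) (hr : 0 < r) (hs : 0 < s)
    (hx : 0 < x) (hy : 0 < y) :
    (r / (r + x)) ^ b * (r / (r + y)) ^ b *
            Real.sqrt (x * y / ((x + s) * (y + s))) *
            (s + x + y) ^ (-(d / 2)) * (r + x + y) ^ (-(d / 2)) / y
    ≤ ((r * s) ^ (-(d / 2)) / s *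
        ((r * s / (r + s)) / (r * s / (r + s) + x) / Real.sqrt x * x)) *
        ((r * s / (r + s)) / (r * s / (r + s) + y) / Real.sqrt y) := by
  have hX := aux_h r s x hr hs hx b hb
  have hY := aux_h r s y hr hs hy b hb
  have hP := aux_pow s x y (d / 2) hs hx hy (by linarith)
  have hR : (r + x + y) ^ (-(d / 2)) ≤ r ^ (-(d / 2)) :=
    Real.rpow_le_rpow_of_nonpos hr (by linarith) (by linarith)
  have hq : Real.sqrt (x * y / ((x + s) * (y + s)))
      = Real.sqrt (x / (x + s)) * Real.sqrt (y / (y + s)) := by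
    rw [← Real.sqrt_mul (by positivity), div_mul_div_comm]
  rw [div_le_iff₀ hy, hq, Real.mul_rpow hr.le hs.le]
  set gx := (r * s / (r + s)) / (r * s / (r + s) + x) / Real.sqrt x
  set gy := (r * s / (r + s)) / (r * s / (r + s) + y) / Real.sqrt y
  calc _ ≤ (r / (r + x)) ^ b * (r / (r + y)) ^ b *
            (Real.sqrt (x / (x + s)) * Real.sqrt (y / (y + s))) *
            (s ^ (-(d / 2)) * (Real.sqrt (s / (s + x)) * Real.sqrt (s / (s + y)))) *
            r ^ (-(d / 2)) := by gcongr
    _ = s ^ (-(d / 2)) * r ^ (-(d / 2)) *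
        (((r / (r + x)) ^ b * Real.sqrt (x / (x + s)) * Real.sqrt (s / (s + x))) *
        ((r / (r + y)) ^ b * Real.sqrt (y / (y + s)) * Real.sqrt (s / (s + y)))) := by ring
    _ ≤ s ^ (-(d / 2)) * r ^ (-(d / 2)) * ((gx * x / Real.sqrt s) * (gy * y / Real.sqrt s)) := by
      gcongr
    _ = _ := by
      rw [div_mul_div_comm, Real.mul_self_sqrt hs.le]
      ring

/-- **Lemma A.4.** The key integral estimate of the renormalization step: for
`d ≥ 2` and an integer `b ≥ 2 + d/2`, the double time-integral `A(r,s)` is bounded by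
`C (r/(s+r)) (rs)^{-d/2} (1 + log((s+r)/s))`, with `C` depending only on `d` and `b`. -/
theorem renormalization_integral_estimate
    (d : ℝ) (hd : 2 ≤ d) (b : ℕ) (hb : 2 + d / 2 ≤ (b : ℝ)) :
    ∃ C, 0 < C ∧ ∀ r : ℝ, r ∈ Set.Ioc (0 : ℝ) 1 → ∀ s : ℝ, 0 < s →
      (∫ t₁ in Set.Ioc (0 : ℝ) 1, (∫ t₂ in Set.Ioc (0 : ℝ) 1,
          (r / (r + t₁)) ^ b * (r / (r + t₂)) ^ b *
            Real.sqrt (t₁ * t₂ / ((t₁ + s) * (t₂ + s))) *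
            (s + t₁ + t₂) ^ (-(d / 2)) * (r + t₁ + t₂) ^ (-(d / 2)) / t₂) / t₁)
        ≤ C * (r / (s + r)) * (r * s) ^ (-(d / 2)) * (1 + Real.log ((s + r) / s)) := by
  refine ⟨Real.pi ^ 2, by positivity, ?_⟩
  rintro r ⟨hr, -⟩ s hs
  have hb1 : 1 ≤ b := by
    have : (1:ℝ) ≤ b := by linarith
    exact_mod_cast this
  set c := r * s / (r + s) with hcdef
  have hc : 0 < c := by positivity
  obtain ⟨hI, hJ⟩ := aux_g c hc
  set J := ∫ t in Ioc (0:ℝ) 1, c / (c + t) / Real.sqrt t with hJdef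
  have hJ0 : 0 ≤ J := by
    apply setIntegral_nonneg measurableSet_Ioc
    intro t ht
    have := ht.1
    positivity
  set K := (r * s) ^ (-(d / 2)) / s with hK
  have hK0 : 0 < K := by positivity
  have inner : ∀ x ∈ Ioc (0:ℝ) 1, (∫ y in Ioc (0:ℝ) 1,
          (r / (r + x)) ^ b * (r / (r + y)) ^ b *
            Real.sqrt (x * y / ((x + s) * (y + s))) *
            (s + x + y) ^ (-(d / 2)) * (r + x + y) ^ (-(d / 2)) / y) / x
        ≤ K * J * (c / (c + x) / Real.sqrt x) := by
    intro x hx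
    have hx0 : 0 < x := hx.1
    rw [div_le_iff₀ hx0]
    calc _ ≤ ∫ y in Ioc (0:ℝ) 1,
          (K * (c / (c + x) / Real.sqrt x * x)) * (c / (c + y) / Real.sqrt y) := by
          apply integral_mono_of_nonneg
          · filter_upwards [ae_restrict_mem measurableSet_Ioc] with y hy
            have := hy.1
            simp only [Pi.zero_apply]
            positivity
          · exact hI.const_mul _
          · filter_upwards [ae_restrict_mem measurableSet_Ioc] with y hy
            exact aux_pt d hd b hb1 r s x y hr hs hx0 hy.1
      _ = _ := by
          rw [integral_const_mul, ← hJdef]; ring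
  have main : (∫ t₁ in Set.Ioc (0 : ℝ) 1, (∫ t₂ in Set.Ioc (0 : ℝ) 1,
          (r / (r + t₁)) ^ b * (r / (r + t₂)) ^ b *
            Real.sqrt (t₁ * t₂ / ((t₁ + s) * (t₂ + s))) *
            (s + t₁ + t₂) ^ (-(d / 2)) * (r + t₁ + t₂) ^ (-(d / 2)) / t₂) / t₁)
        ≤ K * J * J := by
    calc _ ≤ ∫ x in Ioc (0:ℝ) 1, (K * J) * (c / (c + x) / Real.sqrt x) := by
          apply integral_mono_of_nonneg
          · filter_upwards [ae_restrict_mem measurableSet_Ioc] with x hx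
            have hx0 := hx.1
            simp only [Pi.zero_apply]
            apply div_nonneg _ hx0.le
            apply setIntegral_nonneg measurableSet_Ioc
            intro y hy
            have := hy.1
            positivity
          · exact hI.const_mul _
          · filter_upwards [ae_restrict_mem measurableSet_Ioc] with x hx
            exact inner x hx
      _ = _ := by rw [integral_const_mul]
  have hlog : 0 ≤ Real.log ((s + r) / s) := by
    apply Real.log_nonneg
    rw [le_div_iff₀ hs]; linarith
  calc _ ≤ K * J * J := main
    _ ≤ K * (Real.pi * Real.sqrt c) * (Real.pi * Real.sqrt c) := by gcongr
    _ = K * Real.pi ^ 2 * (Real.sqrt c * Real.sqrt c) := by ring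
    _ = Real.pi ^ 2 * (r / (s + r)) * (r * s) ^ (-(d / 2)) * 1 := by
      rw [Real.mul_self_sqrt hc.le, hcdef, hK, add_comm r s]
      field_simp
    _ ≤ _ := by
      gcongr
      linarith
end
end

section
/- For all real numbers ρ, ε with 0 < ρ < ε there is a constant C, depending only on ρ and ε, such that for all r, s ∈ (0,1): ∫_r^1 ( t/(t+s) )^ρ · t^{−ε} dt/t ≤ C·( r/(s+r) )^ρ · r^{−ε}. (Lemma A.5.) -/
open MeasureTheory Set

noncomputable section

/-- **Lemma A.5.** For `0 < ρ < ε` there is a constant `C`, depending only on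
`ρ` and `ε`, such that `∫_r^1 (t/(t+s))^ρ t^{-ε} dt/t ≤ C (r/(s+r))^ρ r^{-ε}` for all
`r, s ∈ (0,1)`. -/
theorem weighted_time_integral_estimate
    (ρ ε : ℝ) (hρ : 0 < ρ) (hρε : ρ < ε) :
    ∃ C, 0 < C ∧ ∀ r s : ℝ, r ∈ Set.Ioo (0 : ℝ) 1 → s ∈ Set.Ioo (0 : ℝ) 1 →
      (∫ t in Set.Ioc r 1, (t / (t + s)) ^ ρ * t ^ (-ε) / t)
        ≤ C * (r / (s + r)) ^ ρ * r ^ (-ε) := by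
  have hd : 0 < ε - ρ := by linarith
  refine ⟨1 / (ε - ρ), by positivity, ?_⟩
  rintro r s ⟨hr, hr1⟩ ⟨hs, hs1⟩
  have ha : ρ - ε - 1 < -1 := by linarith
  have hint : IntegrableOn (fun t : ℝ => (1 / (s + r)) ^ ρ * t ^ (ρ - ε - 1)) (Ioi r) :=
    (integrableOn_Ioi_rpow_of_lt ha hr).const_mul _
  have h1 : (∫ t in Set.Ioc r 1, (t / (t + s)) ^ ρ * t ^ (-ε) / t)
      ≤ ∫ t in Set.Ioc r 1, (1 / (s + r)) ^ ρ * t ^ (ρ - ε - 1) := by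
    refine integral_mono_of_nonneg ?_ (hint.mono_set Ioc_subset_Ioi_self) ?_
    · refine (ae_restrict_iff' measurableSet_Ioc).2 (Filter.Eventually.of_forall ?_)
      intro t ht
      have ht0 : 0 < t := hr.trans ht.1
      simp only [Pi.zero_apply]
      positivity
    · refine (ae_restrict_iff' measurableSet_Ioc).2 (Filter.Eventually.of_forall ?_)
      intro t ht
      have ht0 : 0 < t := hr.trans ht.1
      have hle : (t / (t + s)) ^ ρ ≤ (1 / (s + r)) ^ ρ * t ^ ρ := by
        rw [← Real.mul_rpow (by positivity) ht0.le]
        apply Real.rpow_le_rpow (by positivity) _ hρ.le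
        rw [one_div_mul_eq_div]
        exact div_le_div_of_nonneg_left ht0.le (by positivity) (by linarith [ht.1])
      have he : t ^ (ρ - ε - 1) = t ^ ρ * t ^ (-ε) / t := by
        rw [Real.rpow_sub_one ht0.ne', sub_eq_add_neg, Real.rpow_add ht0]
      simp only [he]
      calc (t / (t + s)) ^ ρ * t ^ (-ε) / t
          ≤ ((1 / (s + r)) ^ ρ * t ^ ρ) * t ^ (-ε) / t := by gcongr
        _ = _ := by ring
  have h2 : (∫ t in Set.Ioc r 1, (1 / (s + r)) ^ ρ * t ^ (ρ - ε - 1))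
      ≤ ∫ t in Set.Ioi r, (1 / (s + r)) ^ ρ * t ^ (ρ - ε - 1) := by
    refine setIntegral_mono_set hint ?_ Ioc_subset_Ioi_self.eventuallyLE
    refine (ae_restrict_iff' measurableSet_Ioi).2 (Filter.Eventually.of_forall ?_)
    intro t ht
    have ht0 : 0 < t := hr.trans ht
    simp only [Pi.zero_apply]
    positivity
  refine (h1.trans h2).trans (le_of_eq ?_)
  rw [integral_const_mul, integral_Ioi_rpow_of_lt ha hr, sub_add_cancel, sub_eq_add_neg ρ ε,
    Real.rpow_add hr, div_eq_mul_one_div r (s + r), Real.mul_rpow hr.le (by positivity),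
    ← sub_eq_add_neg, ← neg_sub ε ρ, neg_div_neg_eq]
  ring
end
end

section
/- Let β ∈ (−2,0), let a be an integer with a ≥ |β|/2 + 1, and let ε ∈ (0,1). Then there is a constant C, depending only on β, a and ε, such that for all λ ≥ 1, all τ ∈ (0,1] and all t > 0: ∫_0^t e^{−λ(t−s)}·( τ/(τ+t−s) )^a·(τ+t−s)^{β/2} ds ≤ C·τ^{β/2+1−ε}·λ^{−ε}. (The core integral estimate, proved by splitting into the cases t ≤ τ and t ≥ τ, in the proof of the exponentially weighted Schauder estimates of Proposition 5.4.) -/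
open MeasureTheory Set

noncomputable section

theorem exp_neg_le_rpow_aux (ε : ℝ) (h0 : 0 < ε) (h1 : ε < 1) (x : ℝ) (hx : 0 < x) :
    Real.exp (-x) ≤ x ^ (-ε) := by
  rw [Real.exp_neg, Real.rpow_neg hx.le]
  apply inv_anti₀ (Real.rpow_pos_of_pos hx _)
  have h2 : x ^ ε ≤ x + 1 := by
    rcases le_total x 1 with h | h
    · have := Real.rpow_le_one hx.le h h0.le
      linarith
    · have := Real.rpow_le_rpow_of_exponent_le h h1.le
      rw [Real.rpow_one] at this
      linarith
  linarith [Real.add_one_le_exp x]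

theorem pointwise_aux (β : ℝ) (hβ : β < 0) (a : ℕ) (ha : 1 ≤ a)
    (ε : ℝ) (h0 : 0 < ε) (h1 : ε < 1) (lam τ u : ℝ) (hl : 0 < lam) (hτ : 0 < τ) (hu : 0 < u) :
    Real.exp (-lam * u) * (τ / (τ + u)) ^ a * (τ + u) ^ (β / 2) ≤
      lam ^ (-ε) * ((Ioc 0 τ).indicator (fun u => τ ^ (β / 2) * u ^ (-ε)) u +
        (Ioi τ).indicator (fun u => τ * u ^ (β / 2 - ε - 1)) u) := by
  have hE : Real.exp (-lam * u) ≤ lam ^ (-ε) * u ^ (-ε) := by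
    rw [← Real.mul_rpow hl.le hu.le, neg_mul]
    exact exp_neg_le_rpow_aux ε h0 h1 _ (by positivity)
  have hq0 : 0 ≤ τ / (τ + u) := by positivity
  have hq1 : τ / (τ + u) ≤ 1 := by
    rw [div_le_one (by positivity)]; linarith
  rcases le_or_gt u τ with h | h
  · rw [indicator_of_mem (show u ∈ Ioc 0 τ from ⟨hu, h⟩), indicator_of_notMem (by simpa using h)]
    have h3 : (τ + u) ^ (β / 2) ≤ τ ^ (β / 2) :=
      Real.rpow_le_rpow_of_nonpos hτ (by linarith) (by linarith)
    have h4 : (τ / (τ + u)) ^ a ≤ 1 := pow_le_one₀ hq0 hq1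
    calc _ ≤ (lam ^ (-ε) * u ^ (-ε)) * 1 * τ ^ (β / 2) := by gcongr
      _ = _ := by ring
  · rw [indicator_of_notMem (by simp [h]), indicator_of_mem (show u ∈ Ioi τ from h)]
    have h3 : (τ + u) ^ (β / 2) ≤ u ^ (β / 2) :=
      Real.rpow_le_rpow_of_nonpos hu (by linarith) (by linarith)
    have h4 : (τ / (τ + u)) ^ a ≤ τ / u := by
      calc _ ≤ (τ / (τ + u)) ^ 1 := pow_le_pow_of_le_one hq0 hq1 ha
        _ = τ / (τ + u) := pow_one _
        _ ≤ τ / u := by gcongr; linarith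
    calc _ ≤ (lam ^ (-ε) * u ^ (-ε)) * (τ / u) * u ^ (β / 2) := by gcongr
      _ = _ := by
        rw [Real.rpow_sub_one hu.ne', sub_eq_add_neg, Real.rpow_add hu]
        field_simp
        ring

/-- The core integral estimate in the exponentially weighted Schauder
estimates: for `β ∈ (-2,0)`, an integer `a ≥ |β|/2 + 1` and `ε ∈ (0,1)`, there is a constant
`C` such that for all `λ ≥ 1`, `τ ∈ (0,1]` and `t > 0`,
`∫_0^t e^{-λ(t-s)} (τ/(τ+t-s))^a (τ+t-s)^{β/2} ds ≤ C τ^{β/2+1-ε} λ^{-ε}`. -/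
theorem weighted_schauder_integral_estimate
    (β : ℝ) (hβ : β ∈ Set.Ioo (-2 : ℝ) 0) (a : ℕ) (ha : |β| / 2 + 1 ≤ (a : ℝ))
    (ε : ℝ) (hε : ε ∈ Set.Ioo (0 : ℝ) 1) :
    ∃ C, 0 < C ∧ ∀ lam : ℝ, 1 ≤ lam → ∀ τ : ℝ, τ ∈ Set.Ioc (0 : ℝ) 1 → ∀ t : ℝ, 0 < t →
      (∫ s in Set.Ioc (0 : ℝ) t,
          Real.exp (-lam * (t - s)) * (τ / (τ + t - s)) ^ a * (τ + t - s) ^ (β / 2))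
        ≤ C * τ ^ (β / 2 + 1 - ε) * lam ^ (-ε) := by
  obtain ⟨hb2, hb0⟩ := hβ
  obtain ⟨h0, h1⟩ := hε
  have ha1 : 1 ≤ a := by
    have : (1 : ℝ) ≤ a := by linarith [abs_nonneg β]
    exact_mod_cast this
  have hp1 : 0 < 1 - ε := by linarith
  have hp2 : 0 < ε - β / 2 := by linarith
  refine ⟨1 / (1 - ε) + 1 / (ε - β / 2), by positivity, ?_⟩
  rintro lam hl τ ⟨hτ, hτ1⟩ t ht
  have hlp : 0 < lam := by linarith
  have e1 : (∫ s in Set.Ioc (0 : ℝ) t,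
          Real.exp (-lam * (t - s)) * (τ / (τ + t - s)) ^ a * (τ + t - s) ^ (β / 2)) =
      ∫ u in Set.Ioc (0 : ℝ) t,
          Real.exp (-lam * u) * (τ / (τ + u)) ^ a * (τ + u) ^ (β / 2) := by
    rw [← intervalIntegral.integral_of_le ht.le, ← intervalIntegral.integral_of_le ht.le]
    have := intervalIntegral.integral_comp_sub_left (a := 0) (b := t)
      (fun u => Real.exp (-lam * u) * (τ / (τ + u)) ^ a * (τ + u) ^ (β / 2)) t
    simp only [sub_self, sub_zero] at this
    rw [← this]
    simp only [add_sub_assoc]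
  have i1 : IntegrableOn (fun u : ℝ => τ ^ (β / 2) * u ^ (-ε)) (Ioc 0 τ) := by
    apply Integrable.const_mul
    exact (intervalIntegrable_iff_integrableOn_Ioc_of_le hτ.le).1
      (intervalIntegral.intervalIntegrable_rpow' (by linarith))
  have i2 : IntegrableOn (fun u : ℝ => τ * u ^ (β / 2 - ε - 1)) (Ioi τ) := by
    apply Integrable.const_mul
    exact integrableOn_Ioi_rpow_of_lt (by linarith) hτ
  have j1 : ∫ u in Ioc 0 τ, τ ^ (β / 2) * u ^ (-ε) =
      τ ^ (β / 2 + 1 - ε) * (1 / (1 - ε)) := by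
    have hp : τ ^ (β / 2 + 1 - ε) = τ ^ (β / 2) * τ ^ (-ε + 1) := by
      rw [← Real.rpow_add hτ]; congr 1; ring
    rw [hp, ← intervalIntegral.integral_of_le hτ.le, intervalIntegral.integral_const_mul,
      integral_rpow (Or.inl (by linarith)), Real.zero_rpow (by linarith), sub_zero,
      show 1 - ε = -ε + 1 by ring, mul_one_div, mul_div_assoc]
  have j2 : ∫ u in Ioi τ, τ * u ^ (β / 2 - ε - 1) =
      τ ^ (β / 2 + 1 - ε) * (1 / (ε - β / 2)) := by
    have hp : τ ^ (β / 2 + 1 - ε) = τ * τ ^ (β / 2 - ε - 1 + 1) := by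
      rw [mul_comm, ← Real.rpow_add_one hτ.ne']; congr 1; ring
    rw [hp, integral_const_mul, integral_Ioi_rpow_of_lt (by linarith) hτ,
      show ε - β / 2 = -(β / 2 - ε - 1 + 1) by ring, mul_one_div, mul_div_assoc, div_neg, neg_div]
  have k1 := i1.integrable_indicator measurableSet_Ioc
  have k2 := i2.integrable_indicator measurableSet_Ioi
  rw [e1, ← integral_indicator measurableSet_Ioc]
  calc _ ≤ ∫ u, lam ^ (-ε) * ((Ioc 0 τ).indicator (fun u => τ ^ (β / 2) * u ^ (-ε)) u +
        (Ioi τ).indicator (fun u => τ * u ^ (β / 2 - ε - 1)) u) := by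
        apply integral_mono_of_nonneg
        · refine Filter.Eventually.of_forall fun u => indicator_nonneg (fun u hu => ?_) u
          have := hu.1
          positivity
        · exact (k1.add k2).const_mul _
        · refine Filter.Eventually.of_forall fun u => ?_
          by_cases hu : u ∈ Ioc 0 t
          · rw [indicator_of_mem hu]
            exact pointwise_aux β hb0 a ha1 ε h0 h1 lam τ u hlp hτ hu.1
          · rw [indicator_of_notMem hu]
            refine mul_nonneg (by positivity) (add_nonneg ?_ ?_)
            · refine indicator_nonneg (fun u hu => ?_) u
              have := hu.1
              positivity
            · refine indicator_nonneg (fun u hu => ?_) u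
              have : 0 < u := hτ.trans hu
              positivity
    _ = _ := by
        rw [integral_const_mul, integral_add k1 k2, integral_indicator measurableSet_Ioc,
          integral_indicator measurableSet_Ioi, j1, j2]
        ring
end
end
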